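/- arXiv:2509.07247 — 3 statements merged into one kernel-verified Lean document; each statement's English description precedes it below -/
import Mathlib

section
/- If closed sets A₁, ..., A_m ⊂ S^d satisfy A_i ∩ (-A_i) = ∅ for all i and ⋃_{i=1}^m A_i = S^d (the A_i alone cover the sphere), then at least ⌈(d+3)/2⌉ of the A_i have a common point, i.e., there is a subset S ⊆ [m] with |S| = ⌈(d+3)/2⌉ and ⋂_{i∈S} A_i ≠ ∅. -/
namespace LLS
open Finsupp

section Alg
variable {X Y Z : Type*}

/-- Chains mod 2 on lists. -/
abbrev Ch (X : Type*) := List X →₀ ZMod 2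

theorem ch_two (c : Ch X) : c + c = 0 := ZModModule.add_self c

theorem ch_eq {a b : Ch X} (h : a + b = 0) : a = b := by
  have := ch_two b
  calc a = a + (b + b) := by rw [this, add_zero]
    _ = (a + b) + b := by abel
    _ = b := by rw [h, zero_add]

theorem z2_two (c : ZMod 2) : c + c = 0 := ZModModule.add_self c

theorem ch_zsmul (c : Ch X) : (2 : ℤ) • c = 0 := by rw [two_zsmul, ch_two]

theorem ch_nsmul (c : Ch X) : (2 : ℕ) • c = 0 := by rw [two_nsmul, ch_two]

noncomputable def cs (x : X) : Ch X →ₗ[ZMod 2] Ch X := Finsupp.lmapDomain _ _ (List.cons x)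

noncomputable def bd : List X → Ch X
  | [] => 0
  | x :: l => single l 1 + cs x (bd l)

noncomputable def D : Ch X →ₗ[ZMod 2] Ch X := Finsupp.linearCombination (ZMod 2) bd

noncomputable def mp (f : X → Y) : Ch X →ₗ[ZMod 2] Ch Y := Finsupp.lmapDomain _ _ (List.map f)

noncomputable def pr (f g : X → Y) : List X → Ch Y
  | [] => 0
  | x :: l => single (f x :: g x :: l.map g) 1 + cs (f x) (pr f g l)

noncomputable def P (f g : X → Y) : Ch X →ₗ[ZMod 2] Ch Y :=
  Finsupp.linearCombination (ZMod 2) (pr f g)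

noncomputable def rr (f g h : X → Y) : List X → Ch Y
  | [] => 0
  | x :: l => cs (f x) (pr g h (x :: l)) + cs (f x) (rr f g h l)

noncomputable def R (f g h : X → Y) : Ch X →ₗ[ZMod 2] Ch Y :=
  Finsupp.linearCombination (ZMod 2) (rr f g h)

noncomputable def ev (φ : List X → ZMod 2) : Ch X →ₗ[ZMod 2] ZMod 2 :=
  Finsupp.linearCombination (ZMod 2) φ

@[simp] theorem cs_single (x : X) (l : List X) (a : ZMod 2) :
    cs x (single l a) = single (x :: l) a := by simp [cs]
@[simp] theorem mp_single (f : X → Y) (l : List X) (a : ZMod 2) :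
    mp f (single l a) = single (l.map f) a := by simp [mp]
@[simp] theorem D_single (l : List X) : D (single l 1) = bd l := by simp [D]
@[simp] theorem P_single (f g : X → Y) (l : List X) : P f g (single l 1) = pr f g l := by simp [P]
@[simp] theorem R_single (f g h : X → Y) (l : List X) :
    R f g h (single l 1) = rr f g h l := by simp [R]
@[simp] theorem ev_single (φ : List X → ZMod 2) (l : List X) : ev φ (single l 1) = φ l := by
  simp [ev]

theorem lin_ext {M : Type*} [AddCommMonoid M] [Module (ZMod 2) M] {F G : Ch X →ₗ[ZMod 2] M}
    (h : ∀ l, F (single l 1) = G (single l 1)) (c : Ch X) : F c = G c := by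
  have : F = G := by
    apply Finsupp.lhom_ext'
    intro l
    ext
    simpa using h l
  rw [this]

theorem D_cs (x : X) (c : Ch X) : D (cs x c) = c + cs x (D c) := by
  have := lin_ext (F := D ∘ₗ cs x) (G := LinearMap.id + cs x ∘ₗ D) (by intro l; simp [bd]) c
  simpa using this

theorem mp_cs (f : X → Y) (x : X) (c : Ch X) : mp f (cs x c) = cs (f x) (mp f c) := by
  have := lin_ext (F := mp f ∘ₗ cs x) (G := cs (f x) ∘ₗ mp f) (by intro l; simp) c
  simpa using this

theorem P_cs (f g : X → Y) (x : X) (c : Ch X) :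
    P f g (cs x c) = cs (f x) (cs (g x) (mp g c)) + cs (f x) (P f g c) := by
  have := lin_ext (F := P f g ∘ₗ cs x)
    (G := cs (f x) ∘ₗ cs (g x) ∘ₗ mp g + cs (f x) ∘ₗ P f g) (by intro l; simp [pr]) c
  simpa using this

theorem R_cs (f g h : X → Y) (x : X) (c : Ch X) :
    R f g h (cs x c) = cs (f x) (P g h (cs x c)) + cs (f x) (R f g h c) := by
  have := lin_ext (F := R f g h ∘ₗ cs x)
    (G := cs (f x) ∘ₗ P g h ∘ₗ cs x + cs (f x) ∘ₗ R f g h) (by intro l; simp [rr]) c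
  simpa using this

theorem D_bd (l : List X) : D (bd l) = 0 := by
  induction l with
  | nil => simp [bd]
  | cons x l ih => simp [bd, D_cs, ih, ch_two]

theorem D_D (c : Ch X) : D (D c) = 0 := by
  simpa using lin_ext (F := D ∘ₗ D) (G := 0) (by intro l; simp [D_bd]) c

theorem mp_bd (f : X → Y) (l : List X) : mp f (bd l) = bd (l.map f) := by
  induction l with
  | nil => simp [bd]
  | cons x l ih => simp [bd, mp_cs, ih]

theorem D_mp (f : X → Y) (c : Ch X) : D (mp f c) = mp f (D c) := by
  simpa using lin_ext (F := D ∘ₗ mp f) (G := mp f ∘ₗ D) (by intro l; simp [mp_bd]) c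

theorem D_pr (f g : X → Y) (l : List X) :
    D (pr f g l) = P f g (bd l) + single (l.map f) 1 + single (l.map g) 1 := by
  induction l with
  | nil => simp [bd, pr, ch_two]
  | cons x l ih =>
    simp only [pr, bd, map_add, D_single, D_cs, ih, P_single, P_cs, cs_single, List.map_cons,
      mp_bd]
    apply ch_eq
    abel_nf
    simp only [ch_zsmul, add_zero]

theorem D_P (f g : X → Y) (c : Ch X) :
    D (P f g c) = P f g (D c) + mp f c + mp g c := by
  simpa using lin_ext (F := D ∘ₗ P f g) (G := P f g ∘ₗ D + mp f + mp g)
    (by intro l; simp [D_pr]) c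

theorem D_rr (f g h : X → Y) (l : List X) :
    D (rr f g h l) = R f g h (bd l) + pr f g l + pr g h l + pr f h l := by
  induction l with
  | nil => simp [bd, pr, rr]
  | cons x l ih =>
    rw [rr]
    simp only [map_add, D_cs, ih, D_pr]
    simp only [bd, pr, map_add, R_cs, R_single, P_cs, P_single, cs_single, List.map_cons]
    apply ch_eq
    abel_nf
    simp only [ch_zsmul, add_zero]

theorem D_R (f g h : X → Y) (c : Ch X) :
    D (R f g h c) = R f g h (D c) + P f g c + P g h c + P f h c := by
  simpa using lin_ext (F := D ∘ₗ R f g h) (G := R f g h ∘ₗ D + P f g + P g h + P f h)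
    (by intro l; simp [D_rr]) c

theorem mp_mp (f : X → Y) (g : Y → Z) (c : Ch X) : mp g (mp f c) = mp (g ∘ f) c := by
  simpa using lin_ext (F := mp g ∘ₗ mp f) (G := mp (g ∘ f)) (by intro l; simp) c

theorem mp_P (f g : X → Y) (u : Y → Z) (c : Ch X) : mp u (P f g c) = P (u ∘ f) (u ∘ g) c := by
  have key : ∀ l, mp u (pr f g l) = pr (u ∘ f) (u ∘ g) l := by
    intro l
    induction l with
    | nil => simp [pr]
    | cons x l ih => simp [pr, mp_cs, ih]
  simpa using lin_ext (F := mp u ∘ₗ P f g) (G := P (u ∘ f) (u ∘ g)) (by intro l; simp [key]) c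

theorem P_mp (u : X → Y) (f g : Y → Z) (c : Ch X) : P f g (mp u c) = P (f ∘ u) (g ∘ u) c := by
  have key : ∀ l, pr f g (l.map u) = pr (f ∘ u) (g ∘ u) l := by
    intro l
    induction l with
    | nil => simp [pr]
    | cons x l ih => simp [pr, ih]
  simpa using lin_ext (F := P f g ∘ₗ mp u) (G := P (f ∘ u) (g ∘ u)) (by intro l; simp [key]) c

theorem ev_mp (u : X → Y) (φ : List Y → ZMod 2) (c : Ch X) :
    ev φ (mp u c) = ev (fun l => φ (l.map u)) c := by
  simpa using lin_ext (F := ev φ ∘ₗ mp u) (G := ev (fun l => φ (l.map u))) (by intro l; simp) c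

theorem ev_cs (x : X) (φ : List X → ZMod 2) (c : Ch X) :
    ev φ (cs x c) = ev (fun l => φ (x :: l)) c := by
  simpa using lin_ext (F := ev φ ∘ₗ cs x) (G := ev (fun l => φ (x :: l))) (by intro l; simp) c

/-! Supports -/

def Sup (G : Set (List X)) : Submodule (ZMod 2) (Ch X) := Finsupp.supported (ZMod 2) (ZMod 2) G

theorem single_mem_Sup {G : Set (List X)} {l : List X} (h : l ∈ G) :
    (single l 1 : Ch X) ∈ Sup G := Finsupp.single_mem_supported _ _ h

theorem Sup_mono {G G' : Set (List X)} (h : G ⊆ G') : Sup G ≤ Sup G' :=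
  Finsupp.supported_mono h

theorem Sup_le {G : Set (List X)} {N : Submodule (ZMod 2) (Ch X)}
    (h : ∀ l ∈ G, (single l 1 : Ch X) ∈ N) : Sup G ≤ N := by
  rw [Sup, Finsupp.supported_eq_span_single, Submodule.span_le]
  rintro _ ⟨l, hl, rfl⟩
  exact h l hl

theorem Sup_map {G : Set (List X)} {G' : Set (List Y)} {F : Ch X →ₗ[ZMod 2] Ch Y}
    (h : ∀ l ∈ G, F (single l 1) ∈ Sup G') {c : Ch X} (hc : c ∈ Sup G) : F c ∈ Sup G' :=
  Sup_le (N := (Sup G').comap F) h hc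

theorem Sup_eq {G : Set (List X)} {M : Type*} [AddCommMonoid M] [Module (ZMod 2) M]
    {F F' : Ch X →ₗ[ZMod 2] M}
    (h : ∀ l ∈ G, F (single l 1) = F' (single l 1)) {c : Ch X} (hc : c ∈ Sup G) : F c = F' c :=
  Sup_le (N := LinearMap.eqLocus F F') h hc

theorem cs_Sup {G G' : Set (List X)} (x : X) (h : ∀ l ∈ G, x :: l ∈ G') {c : Ch X}
    (hc : c ∈ Sup G) : cs x c ∈ Sup G' :=
  Sup_map (fun l hl => by simpa using single_mem_Sup (h l hl)) hc

theorem mp_Sup {G : Set (List X)} {G' : Set (List Y)} (f : X → Y) (h : ∀ l ∈ G, l.map f ∈ G')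
    {c : Ch X} (hc : c ∈ Sup G) : mp f c ∈ Sup G' :=
  Sup_map (fun l hl => by simpa using single_mem_Sup (h l hl)) hc

theorem bd_Sup (l : List X) : bd l ∈ Sup {L | L.Sublist l ∧ L.length + 1 = l.length} := by
  induction l with
  | nil => simp [bd]
  | cons x l ih =>
    refine Submodule.add_mem _ (single_mem_Sup (by simp)) (cs_Sup x ?_ ih)
    rintro L ⟨h1, h2⟩
    exact ⟨h1.cons_cons x, by simp [h2]⟩

theorem pr_Sup (f g : X → Y) (l : List X) :
    pr f g l ∈ Sup {L | L.length = l.length + 1 ∧ ∀ v ∈ L, ∃ x ∈ l, v = f x ∨ v = g x} := by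
  induction l with
  | nil => simp [pr]
  | cons x l ih =>
    refine Submodule.add_mem _ (single_mem_Sup ?_) (cs_Sup _ ?_ ih)
    · refine ⟨by simp, ?_⟩
      intro v hv
      simp only [List.mem_cons, List.mem_map] at hv ⊢
      rcases hv with rfl | rfl | ⟨y, hy, rfl⟩
      · exact ⟨x, by simp⟩
      · exact ⟨x, by simp⟩
      · exact ⟨y, by simp [hy]⟩
    · rintro L ⟨h1, h2⟩
      refine ⟨by simp [h1], ?_⟩
      intro v hv
      simp only [List.mem_cons] at hv ⊢
      rcases hv with rfl | hv
      · exact ⟨x, by simp⟩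
      · obtain ⟨y, hy, h⟩ := h2 v hv
        exact ⟨y, by simp [hy], h⟩

theorem rr_Sup (f g h : X → Y) (l : List X) :
    rr f g h l ∈ Sup {L | L.length = l.length + 2 ∧
      ∀ v ∈ L, ∃ x ∈ l, v = f x ∨ v = g x ∨ v = h x} := by
  induction l with
  | nil => simp [rr]
  | cons x l ih =>
    refine Submodule.add_mem _ (cs_Sup _ ?_ (pr_Sup g h (x :: l))) (cs_Sup _ ?_ ih)
    · rintro L ⟨h1, h2⟩
      refine ⟨by simp [h1], ?_⟩
      intro v hv
      simp only [List.mem_cons] at hv ⊢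
      rcases hv with rfl | hv
      · exact ⟨x, by simp⟩
      · obtain ⟨y, hy, h⟩ := h2 v hv
        exact ⟨y, by simpa using hy, Or.inr h⟩
    · rintro L ⟨h1, h2⟩
      refine ⟨by simp [h1], ?_⟩
      intro v hv
      simp only [List.mem_cons] at hv ⊢
      rcases hv with rfl | hv
      · exact ⟨x, by simp⟩
      · obtain ⟨y, hy, h⟩ := h2 v hv
        exact ⟨y, by simp [hy], h⟩

end Alg
section Comb
open Classical

variable {Λ : Type*}

theorem ev_zero (c : Ch Λ) : ev (fun _ => 0) c = 0 := by
  simpa using lin_ext (F := ev (fun _ : List Λ => (0 : ZMod 2))) (G := 0) (by intro l; simp) c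

theorem ev_add (φ ψ : List Λ → ZMod 2) (c : Ch Λ) :
    ev (fun l => φ l + ψ l) c = ev φ c + ev ψ c := by
  simpa using lin_ext (F := ev (fun l => φ l + ψ l)) (G := ev φ + ev ψ) (by intro l; simp) c

theorem ev_mul (a : ZMod 2) (φ : List Λ → ZMod 2) (c : Ch Λ) :
    ev (fun l => a * φ l) c = a * ev φ c := by
  simpa using lin_ext (F := ev (fun l => a * φ l)) (G := a • ev φ) (by intro l; simp) c

theorem ev_sum {κ : Type*} (s : Finset κ) (φ : κ → List Λ → ZMod 2) (c : Ch Λ) :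
    ev (fun l => ∑ i ∈ s, φ i l) c = ∑ i ∈ s, ev (φ i) c := by
  have := lin_ext (F := ev (fun l => ∑ i ∈ s, φ i l)) (G := ∑ i ∈ s, ev (φ i))
    (by intro l; simp [LinearMap.sum_apply]) c
  simpa [LinearMap.sum_apply] using this

theorem ev_bd_cons (φ : List Λ → ZMod 2) (x : Λ) (l : List Λ) :
    ev φ (bd (x :: l)) = φ l + ev (fun l => φ (x :: l)) (bd l) := by
  simp [bd, ev_cs]

theorem ev_bd_perm {l l' : List Λ} (h : l.Perm l') :
    ∀ φ : List Λ → ZMod 2, (∀ a b, a.Perm b → φ a = φ b) → ev φ (bd l) = ev φ (bd l') := by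
  induction h with
  | nil => intros; rfl
  | cons x h ih =>
    intro φ hφ
    rw [ev_bd_cons, ev_bd_cons, hφ _ _ h, ih _ (fun a b hab => hφ _ _ (hab.cons x))]
  | swap x y l =>
    intro φ hφ
    simp only [ev_bd_cons]
    have : (fun l => φ (y :: x :: l)) = fun l => φ (x :: y :: l) := by
      funext l; exact hφ _ _ (List.Perm.swap x y l)
    rw [this]; ring
  | trans _ _ ih1 ih2 =>
    intro φ hφ
    rw [ih1 φ hφ, ih2 φ hφ]

theorem ev_bd_dup (φ : List Λ → ZMod 2) (hφ : ∀ a b, a.Perm b → φ a = φ b)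
    (h0 : ∀ l, ¬ l.Nodup → φ l = 0) (l : List Λ) (hl : ¬ l.Nodup) : ev φ (bd l) = 0 := by
  obtain ⟨x, hx⟩ := List.exists_duplicate_iff_not_nodup.2 hl
  rw [List.duplicate_iff_sublist] at hx
  obtain ⟨l', hl'⟩ := hx.exists_perm_append
  rw [ev_bd_perm hl' φ hφ]
  simp only [List.cons_append, List.nil_append, ev_bd_cons]
  have : (fun l => φ (x :: x :: l)) = fun _ => 0 := by
    funext l; exact h0 _ (by simp)
  rw [this, ev_zero, add_zero, z2_two]

noncomputable def chi (Q : Finset Λ) (l : List Λ) : ZMod 2 := if l.Perm Q.toList then 1 else 0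

theorem chi_perm (Q : Finset Λ) (a b : List Λ) (h : a.Perm b) : chi Q a = chi Q b := by
  unfold chi
  congr 1
  exact propext ⟨fun h' => h.symm.trans h', fun h' => h.trans h'⟩

theorem chi_len (Q : Finset Λ) (l : List Λ) (h : l.length ≠ Q.card) : chi Q l = 0 := by
  unfold chi
  rw [if_neg]
  intro h'
  exact h (by simpa using h'.length_eq)

theorem chi_cocycle (Q : Finset Λ) (t : ℕ) (hQ : Q.card = t) (l : List Λ)
    (hl : l.toFinset.card ≤ t) : ev (chi Q) (bd l) = 0 := by
  by_cases hn : l.Nodup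
  · rw [List.toFinset_card_of_nodup hn] at hl
    rw [← ev_zero (bd l)]
    refine Sup_eq ?_ (bd_Sup l)
    rintro L ⟨-, h2⟩
    simp only [ev_single]
    exact chi_len _ _ (by omega)
  · refine ev_bd_dup _ (chi_perm Q) ?_ l hn
    intro l hl
    unfold chi
    rw [if_neg]
    intro h
    exact hl (h.nodup_iff.2 Q.nodup_toList)

variable {ι : Type*} [LinearOrder ι]

def alt : Bool → List (ι × Bool) → Prop
  | _, [] => True
  | s, v :: l => v.2 = s ∧ (∀ w ∈ l, v.1 < w.1) ∧ alt (!s) l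

noncomputable def Th (s : Bool) (M : List (ι × Bool)) : ZMod 2 :=
  if ∃ M', M'.Perm M ∧ alt s M' then 1 else 0

def flip (v : ι × Bool) : ι × Bool := (v.1, !v.2)

theorem alt_pairwise (s : Bool) (M : List (ι × Bool)) (h : alt s M) :
    M.Pairwise (fun a b => a.1 < b.1) := by
  induction M generalizing s with
  | nil => simp
  | cons v l ih => exact List.pairwise_cons.2 ⟨h.2.1, ih _ h.2.2⟩

theorem alt_flip (s : Bool) (M : List (ι × Bool)) : alt s (M.map flip) ↔ alt (!s) M := by
  induction M generalizing s with
  | nil => simp [alt]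
  | cons v l ih =>
    simp only [List.map_cons, alt, ih]
    have : (flip v).2 = s ↔ v.2 = !s := by
      simp only [flip]; cases v.2 <;> cases s <;> simp
    have e : (∀ w ∈ l.map flip, (flip v).1 < w.1) ↔ ∀ w ∈ l, v.1 < w.1 := by
      rw [List.forall_mem_map]; rfl
    rw [this, e]

theorem Th_perm (s : Bool) (a b : List (ι × Bool)) (h : a.Perm b) : Th s a = Th s b := by
  unfold Th
  congr 1
  exact propext ⟨fun ⟨M, h1, h2⟩ => ⟨M, h1.trans h, h2⟩, fun ⟨M, h1, h2⟩ => ⟨M, h1.trans h.symm, h2⟩⟩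

theorem Th_dup (s : Bool) (M : List (ι × Bool)) (h : ¬ M.Nodup) : Th s M = 0 := by
  unfold Th
  rw [if_neg]
  rintro ⟨M', h1, h2⟩
  apply h
  rw [← h1.nodup_iff]
  exact (alt_pairwise s M' h2).imp (fun hab => by rintro rfl; exact lt_irrefl _ hab)

theorem flip_flip (v : ι × Bool) : flip (flip v) = v := by simp [flip]

theorem Th_flip (s : Bool) (M : List (ι × Bool)) : Th s (M.map flip) = Th (!s) M := by
  unfold Th
  congr 1
  refine propext ⟨fun ⟨M', h1, h2⟩ => ⟨M'.map flip, ?_, ?_⟩, fun ⟨M', h1, h2⟩ => ⟨M'.map flip, h1.map _, ?_⟩⟩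
  · have := h1.map flip
    simpa [List.map_map, Function.comp_def, flip_flip] using this
  · rw [alt_flip]; simpa using h2
  · rw [alt_flip]; simpa using h2

theorem Th_sorted (s : Bool) (M : List (ι × Bool)) (h : M.Pairwise (fun a b => a.1 < b.1)) :
    Th s M = if alt s M then 1 else 0 := by
  unfold Th
  congr 1
  refine propext ⟨fun ⟨M', h1, h2⟩ => ?_, fun h' => ⟨M, List.Perm.refl _, h'⟩⟩
  have : M' = M := h1.eq_of_pairwise (fun a b _ _ hab hba => absurd hab (lt_asymm hba))
    (alt_pairwise s M' h2) h
  rwa [← this]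

theorem fan_sorted (M : List (ι × Bool)) (h : M.Pairwise (fun a b => a.1 < b.1)) (s : Bool) :
    ev (fun L => if alt s L then 1 else 0) (bd M)
      = (if alt s M then 1 else 0) + (if alt (!s) M then 1 else 0) := by
  induction M generalizing s with
  | nil => simp [bd, alt]; decide
  | cons v l ih =>
    rw [List.pairwise_cons] at h
    rw [ev_bd_cons]
    have e : ev (fun L => if alt s (v :: L) then 1 else 0) (bd l)
        = (if v.2 = s then 1 else 0) * ev (fun L => if alt (!s) L then 1 else 0) (bd l) := by
      rw [← ev_mul]
      refine Sup_eq ?_ (bd_Sup l)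
      rintro L ⟨h1, -⟩
      have : (∀ w ∈ L, v.1 < w.1) = True := eq_true fun w hw => h.1 w (h1.subset hw)
      simp only [ev_single, alt, this, true_and]
      by_cases hv : v.2 = s <;> simp [hv]
    rw [e, ih h.2]
    have h1 : (∀ w ∈ l, v.1 < w.1) = True := by simpa using h.1
    simp only [alt, h1, true_and, Bool.not_not]
    by_cases hs : v.2 = s
    · have hs' : ¬ (v.2 = !s) := by rw [hs]; simp
      simp only [hs, true_and, if_true, one_mul]
      have := z2_two (if alt s l then 1 else 0)
      have hns : ¬ (s = !s) := by simp
      simp only [hns, false_and, if_false, add_zero]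
      linear_combination this
    · have hs' : (v.2 = !s) := by revert hs; cases v.2 <;> cases s <;> simp
      have hns : ¬ ((!s) = s) := by simp
      simp [hs', hns]

theorem fan (M : List (ι × Bool)) (hM : ∀ a ∈ M, ∀ b ∈ M, a.1 = b.1 → a.2 = b.2) :
    ev (Th true) (bd M) = Th true M + Th true (M.map flip) := by
  by_cases hn : M.Nodup
  · let r : ι × Bool → ι × Bool → Prop := fun a b => a.1 ≤ b.1
    have : Std.Total r := ⟨fun a b => le_total _ _⟩
    have : IsTrans _ r := ⟨fun a b c h1 h2 => le_trans h1 h2⟩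
    have hp : (M.insertionSort r).Perm M := List.perm_insertionSort r M
    have hs : (M.insertionSort r).Pairwise r := List.pairwise_insertionSort r M
    generalize M.insertionSort r = M' at hp hs
    have hn' : M'.Nodup := hp.nodup_iff.2 hn
    have hs' : M'.Pairwise (fun a b => a.1 < b.1) := by
      have h2 := hs.and hn'
      refine List.Pairwise.imp_of_mem ?_ h2
      rintro a b ha hb ⟨h1, h3⟩
      refine lt_of_le_of_ne h1 ?_
      intro h4
      exact h3 (Prod.ext h4 (hM a (hp.mem_iff.1 ha) b (hp.mem_iff.1 hb) h4))
    rw [← ev_bd_perm hp _ (Th_perm true), Th_flip, ← Th_perm _ _ _ hp, ← Th_perm _ _ _ hp,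
      Th_sorted _ _ hs', Th_sorted _ _ hs', ← fan_sorted _ hs']
    refine Sup_eq ?_ (bd_Sup M')
    rintro L ⟨h1, -⟩
    simp only [ev_single]
    exact Th_sorted _ _ (hs'.sublist h1)
  · rw [ev_bd_dup _ (Th_perm true) (Th_dup true) M hn, Th_flip, Th_dup _ _ hn, Th_dup _ _ hn,
      add_zero]

def sel (s : Bool) (M : List (Λ × Bool)) : List Λ := (M.filter (fun v => v.2 == s)).map Prod.fst

@[simp] theorem sel_nil (s : Bool) : sel s ([] : List (Λ × Bool)) = [] := rfl

theorem sel_cons (s : Bool) (v : Λ × Bool) (M : List (Λ × Bool)) :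
    sel s (v :: M) = if v.2 = s then v.1 :: sel s M else sel s M := by
  unfold sel
  by_cases h : v.2 = s <;> simp [h]

theorem mem_sel {s : Bool} {M : List (Λ × Bool)} {x : Λ} : x ∈ sel s M ↔ (x, s) ∈ M := by
  simp [sel]

theorem sel_perm (M : List (Λ × Bool)) :
    M.Perm ((sel true M).map (fun i => (i, true)) ++ (sel false M).map (fun i => (i, false))) := by
  induction M with
  | nil => simp
  | cons v M ih =>
    obtain ⟨i, b⟩ := v
    cases b
    · simp only [sel_cons, Bool.false_eq_true, if_false, if_true, List.map_cons]
      exact (ih.cons _).trans List.perm_middle.symm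
    · simp only [sel_cons, Bool.true_eq_false, if_false, if_true, List.map_cons, List.cons_append]
      exact ih.cons _

theorem sel_len (M : List (Λ × Bool)) : M.length = (sel true M).length + (sel false M).length := by
  simpa using (sel_perm M).length_eq

theorem sel_nodup (s : Bool) (M : List (Λ × Bool)) (h : M.Nodup) : (sel s M).Nodup := by
  refine List.Nodup.map_on ?_ (h.filter _)
  intro x hx y hy hxy
  simp at hx hy
  exact Prod.ext hxy (hx.2.trans hy.2.symm)

theorem Th_big (M : List (ι × Bool)) (t : ℕ) (h : ∀ s, (sel s M).toFinset.card ≤ t)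
    (hl : 2 * t < M.length) : Th true M = 0 := by
  by_cases hn : M.Nodup
  · have h1 := h true
    have h2 := h false
    rw [List.toFinset_card_of_nodup (sel_nodup _ _ hn)] at h1 h2
    have := sel_len M
    omega
  · exact Th_dup _ _ hn

theorem Th_plus (M : List (ι × Bool)) (h : ∀ v ∈ M, v.2 = true) (hl : 2 ≤ M.length) :
    Th true M = 0 := by
  unfold Th
  rw [if_neg]
  rintro ⟨M', h1, h2⟩
  rw [← h1.length_eq] at hl
  match M', h1, h2, hl with
  | a :: b :: l, h1, h2, _ =>
    have := h b (h1.mem_iff.1 (by simp))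
    have h3 := h2.2.2.1
    simp [this] at h3

theorem Th_expand [Fintype ι] (M : List (ι × Bool)) (t : ℕ)
    (h : ∀ s, (sel s M).toFinset.card ≤ t) (hl : M.length = 2 * t) :
    Th true M = ∑ Q ∈ Finset.powersetCard t (Finset.univ : Finset ι),
      ∑ N ∈ Finset.powersetCard t (Finset.univ : Finset ι),
        Th true (Q.toList.map (fun i => (i, true)) ++ N.toList.map (fun i => (i, false))) *
          (chi N (sel false M) * chi Q (sel true M)) := by
  by_cases hn : M.Nodup
  · have n1 := sel_nodup true _ hn
    have n2 := sel_nodup false _ hn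
    have h1 := h true
    have h2 := h false
    rw [List.toFinset_card_of_nodup n1] at h1
    rw [List.toFinset_card_of_nodup n2] at h2
    have hL := sel_len M
    have key : ∀ l : List ι, l.Nodup → ∀ Q, l.Perm Q.toList ↔ Q = l.toFinset := by
      intro l hl Q
      constructor
      · intro h
        ext x
        rw [List.mem_toFinset, h.mem_iff, Finset.mem_toList]
      · rintro rfl
        exact (List.toFinset_toList hl).symm
    rw [Finset.sum_eq_single (sel true M).toFinset, Finset.sum_eq_single (sel false M).toFinset]
    · have e1 := (key _ n1 _).2 rfl
      have e2 := (key _ n2 _).2 rfl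
      simp only [chi, if_pos e1, if_pos e2, mul_one]
      refine Th_perm _ _ _ ((sel_perm M).trans ?_)
      exact (e1.map _).append (e2.map _)
    · intro N _ hN
      have : chi N (sel false M) = 0 := by
        unfold chi; rw [if_neg]; rw [key _ n2]; exact hN
      simp [this]
    · intro hN
      exfalso; apply hN
      rw [Finset.mem_powersetCard, List.toFinset_card_of_nodup n2]
      exact ⟨Finset.subset_univ _, by omega⟩
    · intro Q _ hQ
      refine Finset.sum_eq_zero fun N _ => ?_
      have : chi Q (sel true M) = 0 := by
        unfold chi; rw [if_neg]; rw [key _ n1]; exact hQ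
      simp [this]
    · intro hN
      exfalso; apply hN
      rw [Finset.mem_powersetCard, List.toFinset_card_of_nodup n1]
      exact ⟨Finset.subset_univ _, by omega⟩
  · rw [Th_dup _ _ hn]
    symm
    refine Finset.sum_eq_zero fun Q _ => Finset.sum_eq_zero fun N _ => ?_
    suffices chi N (sel false M) * chi Q (sel true M) = 0 by rw [this, mul_zero]
    by_contra h0
    have c1 : (sel false M).Perm N.toList := by
      by_contra h; apply h0; simp [chi, h]
    have c2 : (sel true M).Perm Q.toList := by
      by_contra h; apply h0; simp [chi, h]
    apply hn
    rw [(sel_perm M).nodup_iff, List.nodup_append]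
    refine ⟨(c2.nodup_iff.2 Q.nodup_toList).map (fun a b h => by simpa using h),
      (c1.nodup_iff.2 N.nodup_toList).map (fun a b h => by simpa using h), ?_⟩
    intro a ha b hb
    simp only [List.mem_map] at ha hb
    obtain ⟨_, _, rfl⟩ := ha
    obtain ⟨_, _, rfl⟩ := hb
    simp

end Comb

section Box
variable {X : Type*}

def box (β α : List X → ZMod 2) (L : List (X × Bool)) : ZMod 2 := β (sel false L) * α (sel true L)

theorem ev_box_bd (L : List (X × Bool)) : ∀ β α : List X → ZMod 2,
    ev (box β α) (bd L) = ev β (bd (sel false L)) * α (sel true L)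
      + β (sel false L) * ev α (bd (sel true L)) := by
  induction L with
  | nil => intro β α; simp [bd]
  | cons v L ih =>
    intro β α
    obtain ⟨x, s⟩ := v
    rw [ev_bd_cons]
    cases s
    · have : (fun l => box β α ((x, false) :: l)) = box (fun l => β (x :: l)) α := by
        funext l; simp [box, sel_cons]
      rw [this, ih]
      simp only [sel_cons, Bool.false_eq_true, if_false, if_true, ev_bd_cons, box]
      ring
    · have : (fun l => box β α ((x, true) :: l)) = box β (fun l => α (x :: l)) := by
        funext l; simp [box, sel_cons]
      rw [this, ih]
      simp only [sel_cons, Bool.true_eq_false, if_false, if_true, ev_bd_cons, box]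
      ring

def gm (x : X) : X × Bool := (x, false)
def gp (x : X) : X × Bool := (x, true)

@[simp] theorem sel_gm_f (l : List X) : sel false (l.map gm) = l := by
  induction l with
  | nil => rfl
  | cons x l ih => simp [sel_cons, gm] at *; exact ih
@[simp] theorem sel_gm_t (l : List X) : sel true (l.map gm) = [] := by
  induction l with
  | nil => rfl
  | cons x l ih => simp [sel_cons, gm] at *; exact ih
@[simp] theorem sel_gp_t (l : List X) : sel true (l.map gp) = l := by
  induction l with
  | nil => rfl
  | cons x l ih => simp [sel_cons, gp] at *; exact ih
@[simp] theorem sel_gp_f (l : List X) : sel false (l.map gp) = [] := by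
  induction l with
  | nil => rfl
  | cons x l ih => simp [sel_cons, gp] at *; exact ih

theorem pr_pos (l : List X) : pr gm gp l ∈ Sup {L | sel true L ≠ []} := by
  induction l with
  | nil => simp [pr]
  | cons x l ih =>
    refine Submodule.add_mem _ (single_mem_Sup ?_) (cs_Sup _ ?_ ih)
    · simp [sel_cons, gm, gp]
    · intro L hL
      simpa [sel_cons, gm] using hL

variable [PseudoMetricSpace X]

def Sm (U : Set X) (ε : ℝ) : Set (List X) := {l | ∀ x ∈ l, x ∈ U ∧ ∀ y ∈ l, dist x y < ε}

theorem Sm_mono {U U' : Set X} {ε ε' : ℝ} (h : U ⊆ U') (h' : ε ≤ ε') : Sm U ε ⊆ Sm U' ε' :=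
  fun _ hl x hx => ⟨h (hl x hx).1, fun y hy => ((hl x hx).2 y hy).trans_le h'⟩

theorem Sm_sub {U : Set X} {ε : ℝ} {l l' : List X} (h : ∀ x ∈ l', x ∈ l) (hl : l ∈ Sm U ε) :
    l' ∈ Sm U ε :=
  fun x hx => ⟨(hl x (h x hx)).1, fun y hy => (hl x (h x hx)).2 y (h y hy)⟩

theorem Sup_inter {G G' : Set (List X)} {c : Ch X} (h : c ∈ Sup G) (h' : c ∈ Sup G') :
    c ∈ Sup (G ∩ G') := by
  unfold Sup at *
  rw [Finsupp.supported_inter]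
  exact ⟨h, h'⟩

theorem D_Sup {U : Set X} {ε : ℝ} {c : Ch X} (h : c ∈ Sup (Sm U ε)) : D c ∈ Sup (Sm U ε) := by
  refine Sup_map ?_ h
  intro l hl
  rw [D_single]
  exact Sup_mono (fun L hL => Sm_sub (fun x hx => hL.1.subset hx) hl) (bd_Sup l)

/-- Quantitative chain contractibility. -/
def Ctr (H : Set X) : Prop := ∀ ε > 0, ∃ δ > 0, δ ≤ ε ∧ ∃ K : Ch X →ₗ[ZMod 2] Ch X,
  (∀ l, K (single l 1) ∈ Sup {L | L.length = l.length + 1}) ∧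
  (∀ l ∈ Sm H δ, K (single l 1) ∈ Sup (Sm H ε)) ∧
  (∀ l ∈ Sm H δ, D (K (single l 1)) + K (bd l) = single l 1)

theorem pr_Sm {f g : X → X} {U : Set X} {ε : ℝ} {l : List X}
    (h : ∀ x ∈ l, ∀ y ∈ l, f x ∈ U ∧ g x ∈ U ∧ dist (f x) (f y) < ε ∧ dist (g x) (g y) < ε ∧
      dist (f x) (g y) < ε) : pr f g l ∈ Sup (Sm U ε) := by
  refine Sup_mono ?_ (pr_Sup f g l)
  rintro L ⟨-, hL⟩ v hv
  obtain ⟨x, hx, rfl | rfl⟩ := hL v hv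
  · refine ⟨(h x hx x hx).1, ?_⟩
    intro w hw
    obtain ⟨y, hy, rfl | rfl⟩ := hL w hw
    · exact (h x hx y hy).2.2.1
    · exact (h x hx y hy).2.2.2.2
  · refine ⟨(h x hx x hx).2.1, ?_⟩
    intro w hw
    obtain ⟨y, hy, rfl | rfl⟩ := hL w hw
    · rw [dist_comm]; exact (h y hy x hx).2.2.2.2
    · exact (h x hx y hy).2.2.2.1

theorem Ctr_of_homotopy (H : Set X) (ρ : ℝ → X → X) (p : X) (hp : p ∈ H)
    (h0 : ∀ x ∈ H, ρ 0 x = x) (h1 : ∀ x ∈ H, ρ 1 x = p)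
    (hm : ∀ s ∈ Set.Icc (0 : ℝ) 1, ∀ x ∈ H, ρ s x ∈ H)
    (hc : ∀ ε > 0, ∃ δ > 0, ∀ s ∈ Set.Icc (0 : ℝ) 1, ∀ s' ∈ Set.Icc (0 : ℝ) 1, ∀ x ∈ H, ∀ y ∈ H,
      |s - s'| < δ → dist x y < δ → dist (ρ s x) (ρ s' y) < ε) : Ctr H := by
  intro ε hε
  obtain ⟨δ, hδ, hρ⟩ := hc ε hε
  obtain ⟨M, hM⟩ := exists_nat_one_div_lt hδ
  set r : ℕ → X → X := fun j => ρ (j / (M + 1 : ℝ)) with hr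
  have hMpos : (0 : ℝ) < M + 1 := by positivity
  let K : Ch X →ₗ[ZMod 2] Ch X :=
    (∑ j ∈ Finset.range (M + 1), P (r j) (r (j + 1))) + cs p ∘ₗ mp (r (M + 1))
  have hK : ∀ c, K c = (∑ j ∈ Finset.range (M + 1), P (r j) (r (j + 1)) c)
      + cs p (mp (r (M + 1)) c) := by
    intro c; simp [K, LinearMap.sum_apply]
  have hs : ∀ j ≤ M + 1, ((j : ℝ) / (M + 1 : ℝ)) ∈ Set.Icc (0 : ℝ) 1 := by
    intro j hj
    refine ⟨by positivity, ?_⟩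
    rw [div_le_one hMpos]
    exact_mod_cast hj
  have hrM : ∀ x ∈ H, r (M + 1) x = p := by
    intro x hx
    have : (((M + 1 : ℕ) : ℝ) / (M + 1 : ℝ)) = 1 := by
      push_cast; exact div_self hMpos.ne'
    simp only [hr, this]
    exact h1 x hx
  have hr0 : ∀ x ∈ H, r 0 x = x := by
    intro x hx; simp [hr, h0 x hx]
  have htel : ∀ c : Ch X, D (K c) + K (D c) = mp (r 0) c := by
    intro c
    have key : ∀ N, (∑ j ∈ Finset.range N, D (P (r j) (r (j + 1)) c)) +
        (∑ j ∈ Finset.range N, P (r j) (r (j + 1)) (D c)) = mp (r 0) c + mp (r N) c := by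
      intro N
      induction N with
      | zero => simp [ch_two]
      | succ N ih =>
        rw [Finset.sum_range_succ, Finset.sum_range_succ]
        have : ∀ a b c d : Ch X, (a + b) + (c + d) = (a + c) + (b + d) := by intros; abel
        rw [this, ih, D_P]
        apply ch_eq
        abel_nf
        simp only [ch_zsmul, add_zero]
    rw [hK, hK, map_add, map_sum, D_cs, D_mp]
    have := key (M + 1)
    have e : ∀ a b c d e : Ch X, (a + (b + c)) + (d + c) = (a + d) + b + (c + c) := by
      intros; abel
    rw [e _ _ _ _ 0, this, ch_two, add_zero, add_assoc, ch_two, add_zero]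
  refine ⟨min δ ε, lt_min hδ hε, min_le_right _ _, K, ?_, ?_, ?_⟩
  · intro l
    rw [hK]
    refine Submodule.add_mem _ (Submodule.sum_mem _ fun j _ => ?_) ?_
    · rw [P_single]
      exact Sup_mono (fun L hL => hL.1) (pr_Sup _ _ l)
    · simp only [mp_single, cs_single]
      exact single_mem_Sup (by simp)
  · intro l hl
    rw [hK]
    have hl' : ∀ x ∈ l, x ∈ H ∧ ∀ y ∈ l, dist x y < δ := fun x hx =>
      ⟨(hl x hx).1, fun y hy => ((hl x hx).2 y hy).trans_le (min_le_left _ _)⟩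
    refine Submodule.add_mem _ (Submodule.sum_mem _ fun j hj => ?_) ?_
    · rw [P_single]
      rw [Finset.mem_range] at hj
      have s1 := hs j hj.le
      have s2 := hs (j + 1) hj
      have hd : |(j : ℝ) / (M + 1) - ((j + 1 : ℕ) : ℝ) / (M + 1)| < δ := by
        have : (j : ℝ) / (M + 1) - ((j + 1 : ℕ) : ℝ) / (M + 1) = - (1 / (M + 1)) := by
          push_cast; ring
        rw [this, abs_neg, abs_of_pos (by positivity)]
        exact hM
      refine pr_Sm ?_
      intro x hx y hy
      have hxy := (hl' x hx).2 y hy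
      have hx := (hl' x hx).1
      have hy := (hl' y hy).1
      refine ⟨hm _ s1 x hx, hm _ s2 x hx, hρ _ s1 _ s1 x hx y hy (by simpa using hδ) hxy,
        hρ _ s2 _ s2 x hx y hy (by simpa using hδ) hxy, hρ _ s1 _ s2 x hx y hy hd hxy⟩
    · simp only [mp_single, cs_single]
      refine single_mem_Sup ?_
      have : ∀ v ∈ p :: l.map (r (M + 1)), v = p := by
        intro v hv
        simp only [List.mem_cons, List.mem_map] at hv
        rcases hv with h | ⟨x, hx, rfl⟩
        · exact h
        · exact hrM x (hl' x hx).1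
      intro v hv
      rw [this v hv]
      refine ⟨hp, fun w hw => ?_⟩
      rw [this w hw, dist_self]; exact hε
  · intro l hl
    have := htel (single l 1)
    rw [D_single] at this
    rw [this, mp_single]
    congr 1
    conv_rhs => rw [← List.map_id l]
    exact List.map_congr_left fun x hx => hr0 x (hl x hx).1

theorem map_Sm {T : X → X} (hT : ∀ x y, dist (T x) (T y) = dist x y) {U U' : Set X}
    (hU : ∀ x ∈ U, T x ∈ U') {ε : ℝ} {l : List X} (hl : l ∈ Sm U ε) : l.map T ∈ Sm U' ε := by
  intro v hv
  simp only [List.mem_map] at hv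
  obtain ⟨x, hx, rfl⟩ := hv
  refine ⟨hU x (hl x hx).1, ?_⟩
  intro w hw
  simp only [List.mem_map] at hw
  obtain ⟨y, hy, rfl⟩ := hw
  rw [hT]; exact (hl x hx).2 y hy

theorem Ctr_T {T : X → X} (hTT : ∀ x, T (T x) = x) (hT : ∀ x y, dist (T x) (T y) = dist x y)
    {H : Set X} (h : Ctr H) : Ctr (T ⁻¹' H) := by
  intro ε hε
  obtain ⟨δ, hδ, hle, K, k1, k2, k3⟩ := h ε hε
  have hcomp : T ∘ T = id := funext hTT
  refine ⟨δ, hδ, hle, mp T ∘ₗ K ∘ₗ mp T, ?_, ?_, ?_⟩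
  · intro l
    simp only [LinearMap.comp_apply, mp_single]
    refine mp_Sup T ?_ (k1 (l.map T))
    intro L hL
    simpa using hL
  · intro l hl
    simp only [LinearMap.comp_apply, mp_single]
    refine mp_Sup T ?_ (k2 (l.map T) (map_Sm hT (fun x hx => hx) hl))
    intro L hL
    exact map_Sm hT (fun x hx => by simpa [hTT] using hx) hL
  · intro l hl
    simp only [LinearMap.comp_apply, mp_single, D_mp, mp_bd]
    rw [← map_add, k3 _ (map_Sm hT (fun x hx => hx) hl)]
    simp [hcomp]

end Box

section Tower
variable {X : Type*} [PseudoMetricSpace X]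

/-- A filtration modelling the hemispheres. -/
structure Filt (T : X → X) (H : ℕ → Set X) (x0 : X) (n : ℕ) : Prop where
  inv : ∀ x, T (T x) = x
  iso : ∀ x y, dist (T x) (T y) = dist x y
  base : x0 ∈ H 0
  sub : ∀ j < n, H j ⊆ H (j + 1)
  subT : ∀ j < n, ∀ x ∈ H j, T x ∈ H (j + 1)
  ctr : ∀ j ≤ n, Ctr (H j)

structure Tow (T : X → X) (H : ℕ → Set X) (x0 : X) (n : ℕ) (δ : ℝ) (h : ℕ → Ch X) : Prop where
  zero : h 0 = single [x0] 1
  small : ∀ j ≤ n, h j ∈ Sup (Sm (H j) δ)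
  len : ∀ j ≤ n, h j ∈ Sup {l | l.length = j + 1}
  bdry : ∀ j < n, D (h (j + 1)) = h j + mp T (h j)

variable {T : X → X} {H : ℕ → Set X} {x0 : X} {n : ℕ}

theorem Filt.mpmp (F : Filt T H x0 n) (c : Ch X) : mp T (mp T c) = c := by
  rw [mp_mp, show T ∘ T = id from funext F.inv]
  simpa using lin_ext (F := mp id) (G := LinearMap.id) (by intro l; simp) c

theorem cyc (F : Filt T H x0 n) {δ : ℝ} {h : ℕ → Ch X} {k : ℕ} (W : Tow T H x0 k δ h) :
    ∀ j ≤ k, D (h j + mp T (h j)) = 0 := by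
  intro j hj
  cases j with
  | zero => rw [W.zero]; simp [bd, ch_two]
  | succ j =>
    rw [map_add, D_mp, W.bdry j hj, map_add, F.mpmp, add_comm (mp T (h j)), ch_two]

theorem Tow.zsmall (F : Filt T H x0 n) {δ : ℝ} {h : ℕ → Ch X} {k : ℕ} (W : Tow T H x0 k δ h)
    {j : ℕ} (hj : j ≤ k) (hjn : j < n) : h j + mp T (h j) ∈ Sup (Sm (H (j + 1)) δ) :=
  Submodule.add_mem _ (Sup_mono (Sm_mono (F.sub j hjn) le_rfl) (W.small j hj))
    (mp_Sup T (fun _ hl => map_Sm F.iso (F.subT j hjn) hl) (W.small j hj))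

theorem Tow.zlen {δ : ℝ} {h : ℕ → Ch X} {k : ℕ} (W : Tow T H x0 k δ h)
    {j : ℕ} (hj : j ≤ k) : h j + mp T (h j) ∈ Sup {l | l.length = j + 1} :=
  Submodule.add_mem _ (W.len j hj) (mp_Sup T (fun l hl => by simpa using hl) (W.len j hj))

theorem exists_tow (F : Filt T H x0 n) : ∀ k ≤ n, ∀ ε > 0, ∃ h, Tow T H x0 k ε h := by
  intro k
  induction k with
  | zero =>
    intro _ ε hε
    refine ⟨fun _ => single [x0] 1, rfl, ?_, ?_, ?_⟩
    · intro j hj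
      obtain rfl : j = 0 := by omega
      refine single_mem_Sup ?_
      intro x hx
      simp only [List.mem_singleton] at hx
      subst hx
      refine ⟨F.base, ?_⟩
      intro y hy
      simp only [List.mem_singleton] at hy
      subst hy
      simpa using hε
    · intro j hj
      obtain rfl : j = 0 := by omega
      exact single_mem_Sup (by simp)
    · intro j hj; omega
  | succ k ih =>
    intro hk ε hε
    obtain ⟨δ, hδ, hle, K, k1, k2, k3⟩ := F.ctr (k + 1) hk ε hε
    obtain ⟨h, W⟩ := ih (by omega) δ hδ
    set z := h k + mp T (h k) with hz
    have zs : z ∈ Sup (Sm (H (k + 1)) δ) := W.zsmall F le_rfl hk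
    have zl := W.zlen (j := k) le_rfl
    refine ⟨fun j => if j = k + 1 then K z else h j, by simp [W.zero], ?_, ?_, ?_⟩
    · intro j hj
      by_cases h' : j = k + 1
      · subst h'
        simp only [if_true]
        exact Sup_map k2 zs
      · simp only [h', if_false]
        exact Sup_mono (Sm_mono subset_rfl hle) (W.small j (by omega))
    · intro j hj
      by_cases h' : j = k + 1
      · subst h'
        simp only [if_true]
        refine Sup_map (G := {l | l.length = k + 1}) ?_ zl
        intro l hl
        have := k1 l
        rw [Set.mem_ofPred_eq] at hl
        rwa [hl] at this
      · simp only [h', if_false]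
        exact W.len j (by omega)
    · intro j hj
      have hjk : j ≠ k + 1 := by omega
      by_cases h' : j = k
      · subst h'
        simp only [if_true, hjk, if_false]
        have e : D (K z) + K (D z) = z := by
          have := Sup_eq (F := D ∘ₗ K + K ∘ₗ D) (F' := LinearMap.id)
            (fun l hl => by simpa using k3 l hl) zs
          simpa using this
        rw [cyc F W j le_rfl, map_zero, add_zero] at e
        exact e
      · have : j + 1 ≠ k + 1 := by omega
        simp only [this, hjk, if_false]
        exact W.bdry j (by omega)

theorem sel_pr_mem {l : List X} {L : List (X × Bool)}
    (hL : ∀ v ∈ L, ∃ x ∈ l, v = gm x ∨ v = gp x) (s : Bool) : ∀ x ∈ sel s L, x ∈ l := by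
  intro x hx
  rw [mem_sel] at hx
  obtain ⟨y, hy, h | h⟩ := hL _ hx
  · simp only [gm, Prod.mk.injEq] at h; rw [h.1]; exact hy
  · simp only [gp, Prod.mk.injEq] at h; rw [h.1]; exact hy

theorem half {U : Set X} {δ ε : ℝ} (hle : δ ≤ ε) {c : Ch X} (hc : c ∈ Sup (Sm U δ))
    {α β γ : List X → ZMod 2} (hγ : ∀ l ∈ Sm U δ, ev γ (bd l) = α l)
    (hβ : ∀ l ∈ Sm Set.univ ε, ev β (bd l) = 0) (hβ0 : β [] = 0) :
    ev (box β α) (P gm gp c) = ev (box β γ) (P gm gp (D c)) + ev (box β γ) (mp gm c) := by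
  have e1 : ev (box β α) (P gm gp c) = ev (box β γ) (D (P gm gp c)) := by
    refine Sup_eq (F := ev (box β α) ∘ₗ P gm gp) (F' := ev (box β γ) ∘ₗ D ∘ₗ P gm gp) ?_ hc
    intro l hl
    simp only [LinearMap.comp_apply, P_single]
    refine Sup_eq (F' := ev (box β γ) ∘ₗ D) ?_ (pr_Sup gm gp l)
    rintro L ⟨-, hL⟩
    simp only [LinearMap.comp_apply, D_single, ev_single, ev_box_bd]
    rw [hβ, hγ]
    · simp [box]
    · exact Sm_sub (sel_pr_mem hL true) hl
    · exact Sm_mono (Set.subset_univ _) hle (Sm_sub (sel_pr_mem hL false) hl)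
  have e2 : ev (box β γ) (mp gp c) = 0 := by
    rw [ev_mp]
    have : (fun l : List X => box β γ (l.map gp)) = fun _ => 0 := by
      funext l; simp [box, hβ0]
    rw [this, ev_zero]
  rw [e1, D_P, map_add, map_add, e2, add_zero]

theorem exists_prim {U : Set X} (hU : Ctr U) {ε : ℝ} (hε : 0 < ε) : ∃ δ > 0, δ ≤ ε ∧
    ∀ (p : ℕ) (α : List X → ZMod 2), (∀ l, l.length ≠ p + 1 → α l = 0) →
      (∀ l ∈ Sm U ε, ev α (bd l) = 0) →
      ∃ γ : List X → ZMod 2, (∀ l, l.length ≠ p → γ l = 0) ∧ ∀ l ∈ Sm U δ, ev γ (bd l) = α l := by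
  obtain ⟨δ, hδ, hle, K, k1, k2, k3⟩ := hU ε hε
  refine ⟨δ, hδ, hle, ?_⟩
  intro p α hα hc
  refine ⟨fun l => ev α (K (single l 1)), ?_, ?_⟩
  · intro l hl
    have := Sup_eq (F := ev α) (F' := ev (fun _ => 0)) ?_ (k1 l)
    · show ev α (K (single l 1)) = 0
      rw [this, ev_zero]
    · intro L hL
      simp only [ev_single]
      apply hα
      rw [Set.mem_ofPred_eq] at hL
      omega
  · intro l hl
    have e : ∀ c, ev (fun l => ev α (K (single l 1))) c = ev α (K c) := by
      intro c
      exact lin_ext (F := ev (fun l => ev α (K (single l 1)))) (G := ev α ∘ₗ K)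
        (by intro l; simp) c
    rw [e]
    have h3 := congrArg (ev α) (k3 l hl)
    rw [map_add, ev_single] at h3
    have h4 : ev α (D (K (single l 1))) = 0 := by
      have := Sup_eq (F := ev α ∘ₗ D) (F' := 0) ?_ (k2 l hl)
      · simpa using this
      · intro L hL
        simpa using hc L hL
    rw [h4, zero_add] at h3
    exact h3

theorem Blem (F : Filt T H x0 n) (p q : ℕ) (hq : 1 ≤ q) (hqn : q + 1 ≤ n) :
    p + q ≤ n → ∀ ε > 0, ∃ δ > 0, δ ≤ ε ∧ ∀ h, Tow T H x0 n δ h → ∀ α β : List X → ZMod 2,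
      (∀ l, l.length ≠ p + 1 → α l = 0) → (∀ l, l.length ≠ q + 1 → β l = 0) →
      (∀ l ∈ Sm Set.univ ε, ev β (bd l) = 0) →
      (∀ l ∈ Sm (H (p + q)) ε, ev α (bd l) = 0) →
      (∀ l ∈ Sm (T ⁻¹' H (p + q)) ε, ev α (bd l) = 0) →
      ev (box β α) (P gm gp (h (p + q) + mp T (h (p + q)))) = 0 := by
  induction p with
  | zero =>
    simp only [Nat.zero_add]
    intro hk ε hε
    obtain ⟨δ1, hδ1, hle1, G1⟩ := exists_prim (F.ctr q hk) hε
    obtain ⟨δ2, hδ2, hle2, G2⟩ := exists_prim (Ctr_T F.inv F.iso (F.ctr q hk)) hε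
    refine ⟨min δ1 δ2, lt_min hδ1 hδ2, (min_le_left _ _).trans hle1, ?_⟩
    intro h W α β hα hβ cβ cα1 cα2
    obtain ⟨γ1, g1, g1'⟩ := G1 0 α hα cα1
    obtain ⟨γ2, g2, g2'⟩ := G2 0 α hα cα2
    have hβ0 : β [] = 0 := hβ _ (by simp)
    have x1 : x0 ∈ H 1 := F.sub 0 (by omega) F.base
    have mono : ∀ j, 1 ≤ j → j ≤ n → x0 ∈ H j ∧ T x0 ∈ H j := by
      intro j hj
      induction j, hj using Nat.le_induction with
      | base => intro _; exact ⟨x1, F.subT 0 (by omega) _ F.base⟩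
      | succ j _ ih =>
        intro hj
        exact ⟨F.sub j hj (ih (by omega)).1, F.sub j hj (ih (by omega)).2⟩
    have hx := mono q hq hk
    have hc : γ1 [] = γ2 [] := by
      have a1 := g1' [x0] (by
        intro x hx'; simp only [List.mem_singleton] at hx'; subst hx'
        exact ⟨hx.1, by simpa using hδ1⟩)
      have a2 := g2' [x0] (by
        intro x hx'; simp only [List.mem_singleton] at hx'; subst hx'
        exact ⟨hx.2, by simpa using hδ2⟩)
      simp [bd] at a1 a2
      rw [a1, a2]
    have hγ : γ1 = γ2 := by
      funext l
      cases l with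
      | nil => exact hc
      | cons x l => rw [g1 _ (by simp), g2 _ (by simp)]
    have s1 : h q ∈ Sup (Sm (H q) (min δ1 δ2)) := W.small q hk
    have s2 : mp T (h q) ∈ Sup (Sm (T ⁻¹' H q) (min δ1 δ2)) :=
      mp_Sup T (fun l hl => map_Sm F.iso (fun x hx => by simpa [F.inv] using hx) hl) s1
    rw [map_add, map_add,
      half ((min_le_left _ _).trans hle1) s1
        (fun l hl => g1' l (Sm_mono subset_rfl (min_le_left _ _) hl)) cβ hβ0,
      half ((min_le_left _ _).trans hle1) s2
        (fun l hl => g2' l (Sm_mono subset_rfl (min_le_right _ _) hl)) cβ hβ0, ← hγ]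
    have e0 : ∀ c, ev (box β γ1) (P gm gp c) = 0 := by
      intro c
      have := lin_ext (F := ev (box β γ1) ∘ₗ P gm gp) (G := 0) ?_ c
      · simpa using this
      · intro l
        simp only [LinearMap.comp_apply, P_single, LinearMap.zero_apply]
        have := Sup_eq (F := ev (box β γ1)) (F' := 0) ?_ (pr_pos l)
        · simpa using this
        · intro L hL
          simp only [ev_single, box, LinearMap.zero_apply]
          rw [g1 (sel true L), mul_zero]
          intro h0
          exact hL (List.length_eq_zero_iff.1 h0)
    rw [e0, e0, zero_add, zero_add, ← map_add, ← map_add, ← W.bdry q hqn, ev_mp]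
    have e1 : (fun l : List X => box β γ1 (l.map gm)) = fun l => γ1 [] * β l := by
      funext l; simp [box, mul_comm]
    rw [e1, ev_mul]
    have e2 : ev β (D (h (q + 1))) = 0 := by
      have := Sup_eq (F := ev β ∘ₗ D) (F' := 0) ?_ (W.small (q + 1) hqn)
      · simpa using this
      · intro l hl
        simpa using cβ l (Sm_mono (Set.subset_univ _) ((min_le_left _ _).trans hle1) hl)
    rw [e2, mul_zero]
  | succ p ih =>
    intro hk ε hε
    obtain ⟨δ1, hδ1, hle1, G1⟩ := exists_prim (F.ctr (p + 1 + q) hk) hε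
    obtain ⟨δ2, hδ2, hle2, G2⟩ := exists_prim (Ctr_T F.inv F.iso (F.ctr (p + 1 + q) hk)) hε
    obtain ⟨δ, hδ, hle, IH⟩ := ih (by omega) (min δ1 δ2) (lt_min hδ1 hδ2)
    have hle1' := hle.trans (min_le_left _ _)
    have hle2' := hle.trans (min_le_right _ _)
    refine ⟨δ, hδ, hle1'.trans hle1, ?_⟩
    intro h W α β hα hβ cβ cα1 cα2
    obtain ⟨γ1, g1, g1'⟩ := G1 (p + 1) α hα cα1
    obtain ⟨γ2, g2, g2'⟩ := G2 (p + 1) α hα cα2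
    have hβ0 : β [] = 0 := hβ _ (by simp)
    have s1 : h (p + 1 + q) ∈ Sup (Sm (H (p + 1 + q)) δ) := W.small _ hk
    have s2 : mp T (h (p + 1 + q)) ∈ Sup (Sm (T ⁻¹' H (p + 1 + q)) δ) :=
      mp_Sup T (fun l hl => map_Sm F.iso (fun x hx => by simpa [F.inv] using hx) hl) s1
    have en : p + 1 + q = p + q + 1 := by omega
    have e0 : ∀ γ : List X → ZMod 2, γ [] = 0 → ∀ c, ev (box β γ) (mp gm c) = 0 := by
      intro γ hγ c
      rw [ev_mp]
      have : (fun l : List X => box β γ (l.map gm)) = fun _ => 0 := by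
        funext l; simp [box, hγ]
      rw [this, ev_zero]
    rw [map_add, map_add,
      half (hle1'.trans hle1) s1
        (fun l hl => g1' l (Sm_mono subset_rfl hle1' hl)) cβ hβ0,
      half (hle1'.trans hle1) s2
        (fun l hl => g2' l (Sm_mono subset_rfl hle2' hl)) cβ hβ0,
      e0 _ (g1 _ (by simp)), e0 _ (g2 _ (by simp)), add_zero, add_zero]
    have d1 : D (h (p + 1 + q)) = h (p + q) + mp T (h (p + q)) := by
      rw [en]; exact W.bdry _ (by omega)
    have d2 : D (mp T (h (p + 1 + q))) = h (p + q) + mp T (h (p + q)) := by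
      rw [D_mp, d1, map_add, F.mpmp, add_comm]
    rw [d1, d2]
    have hb : (fun L => box β γ1 L + box β γ2 L) = box β (fun l => γ1 l + γ2 l) := by
      funext L; simp [box, mul_add]
    rw [← ev_add, hb]
    have hsub : p + q < n := by omega
    have common : ∀ U : Set X, U ⊆ H (p + 1 + q) → U ⊆ T ⁻¹' H (p + 1 + q) →
        ∀ l ∈ Sm U (min δ1 δ2), ev (fun l => γ1 l + γ2 l) (bd l) = 0 := by
      intro U hU1 hU2 l hl
      rw [ev_add, g1' l (Sm_mono hU1 (min_le_left _ _) hl),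
        g2' l (Sm_mono hU2 (min_le_right _ _) hl), z2_two]
    refine IH h W _ β ?_ hβ ?_ ?_ ?_
    · intro l hl
      rw [g1 l hl, g2 l hl, add_zero]
    · intro l hl
      exact cβ l (Sm_mono subset_rfl ((min_le_left _ _).trans hle1) hl)
    · refine common _ ?_ ?_
      · rw [en]; exact F.sub _ hsub
      · rw [en]; exact F.subT _ hsub
    · refine common _ ?_ ?_
      · intro x hx
        rw [en]
        have := F.subT _ hsub _ hx
        rwa [F.inv] at this
      · intro x hx
        rw [en]
        exact F.sub _ hsub hx

end Tower

section Final
variable {X : Type*} [PseudoMetricSpace X] {ι : Type*} [LinearOrder ι]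

def TV (T : X → X) (v : X × Bool) : X × Bool := (T v.1, !v.2)

def lab (T : X → X) (f : X → ι) (v : X × Bool) : ι × Bool :=
  (if v.2 = true then f v.1 else f (T v.1), v.2)

theorem lab_TV {T : X → X} (hT : ∀ x, T (T x) = x) (f : X → ι) (v : X × Bool) :
    lab T f (TV T v) = flip (lab T f v) := by
  obtain ⟨x, s⟩ := v
  cases s <;> simp [lab, TV, flip, hT]

theorem sel_lab_t (T : X → X) (f : X → ι) (L : List (X × Bool)) :
    sel true (L.map (lab T f)) = (sel true L).map f := by
  induction L with
  | nil => rfl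
  | cons v L ih =>
    obtain ⟨x, s⟩ := v
    cases s <;> simp [sel_cons, lab] at * <;> exact ih

theorem sel_lab_f (T : X → X) (f : X → ι) (L : List (X × Bool)) :
    sel false (L.map (lab T f)) = (sel false L).map (f ∘ T) := by
  induction L with
  | nil => rfl
  | cons v L ih =>
    obtain ⟨x, s⟩ := v
    cases s <;> simp [sel_cons, lab] at * <;> exact ih

noncomputable def ThV (T : X → X) (f : X → ι) (L : List (X × Bool)) : ZMod 2 :=
  Th true (L.map (lab T f))

/-- Lists in `X × Bool` with small underlying list. -/
def Gd (ε : ℝ) : Set (List (X × Bool)) := {L | L.map Prod.fst ∈ Sm (Set.univ : Set X) ε}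

theorem fanV {T : X → X} (hT : ∀ x, T (T x) = x) (f : X → ι) {ε : ℝ}
    (hf : ∀ x y, dist x y < ε → f x ≠ f (T y)) {c : Ch (X × Bool)} (hc : c ∈ Sup (Gd ε)) :
    ev (ThV T f) (D c) = ev (ThV T f) c + ev (ThV T f) (mp (TV T) c) := by
  have := Sup_eq (F := ev (ThV T f) ∘ₗ D) (F' := ev (ThV T f) + ev (ThV T f) ∘ₗ mp (TV T)) ?_ hc
  · simpa using this
  intro L hL
  simp only [LinearMap.comp_apply, LinearMap.add_apply, D_single, mp_single, ev_single]
  have e : ev (ThV T f) (bd L) = ev (Th true) (bd (L.map (lab T f))) := by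
    rw [← mp_bd, ev_mp]; rfl
  rw [e, fan]
  · unfold ThV
    congr 2
    simp only [List.map_map]
    apply List.map_congr_left
    intro v _
    exact (lab_TV hT f v).symm
  · have hd : ∀ v ∈ L, ∀ w ∈ L, dist v.1 w.1 < ε := by
      intro v hv w hw
      exact (hL v.1 (List.mem_map_of_mem hv)).2 w.1 (List.mem_map_of_mem hw)
    intro a ha b hb
    simp only [List.mem_map] at ha hb
    obtain ⟨⟨x, s⟩, hx, rfl⟩ := ha
    obtain ⟨⟨y, r⟩, hy, rfl⟩ := hb
    intro hab
    cases s <;> cases r <;> simp [lab] at hab ⊢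
    · exact hf y x (hd _ hy _ hx) hab.symm
    · exact hf x y (hd _ hx _ hy) hab

theorem core [Fintype ι] {T : X → X} {H : ℕ → Set X} {x0 : X} {d : ℕ} (hd : 1 ≤ d)
    (F : Filt T H x0 d) (f : X → ι) {ε : ℝ} (hε : 0 < ε)
    (hf : ∀ x y, dist x y < ε → f x ≠ f (T y))
    (hs : ∀ l ∈ Sm (Set.univ : Set X) ε, ∃ s : Finset ι, s.card ≤ (d + 2) / 2 ∧ ∀ x ∈ l, f x ∈ s) :
    False := by
  classical
  have hT := F.inv
  set t := (d + 2) / 2 with ht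
  have hcard : ∀ l ∈ Sm (Set.univ : Set X) ε, (l.map f).toFinset.card ≤ t := by
    intro l hl
    obtain ⟨s, h1, h2⟩ := hs l hl
    refine (Finset.card_le_card ?_).trans h1
    intro i hi
    simp only [List.mem_toFinset, List.mem_map] at hi
    obtain ⟨x, hx, rfl⟩ := hi
    exact h2 x hx
  have hcardT : ∀ l ∈ Sm (Set.univ : Set X) ε, (l.map (f ∘ T)).toFinset.card ≤ t := by
    intro l hl
    rw [← List.map_map]
    exact hcard _ (map_Sm F.iso (fun _ _ => Set.mem_univ _) hl)
  have selG : ∀ L ∈ Gd (X := X) ε, ∀ s, sel s L ∈ Sm (Set.univ : Set X) ε := by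
    intro L hL s
    refine Sm_sub ?_ hL
    intro x hx
    exact List.mem_map.2 ⟨_, mem_sel.1 hx, rfl⟩
  have hsel : ∀ L ∈ Gd (X := X) ε, ∀ s, (sel s (L.map (lab T f))).toFinset.card ≤ t := by
    intro L hL s
    cases s
    · rw [sel_lab_f]; exact hcardT _ (selG L hL _)
    · rw [sel_lab_t]; exact hcard _ (selG L hL _)
  -- scale
  obtain ⟨δ, hδ, hle, hB⟩ : ∃ δ > 0, δ ≤ ε ∧ ∀ h, Tow T H x0 d δ h → d = 2 * (t - 1) →
      ∀ α β : List X → ZMod 2,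
      (∀ l, l.length ≠ t → α l = 0) → (∀ l, l.length ≠ t → β l = 0) →
      (∀ l ∈ Sm Set.univ ε, ev β (bd l) = 0) →
      (∀ l ∈ Sm Set.univ ε, ev α (bd l) = 0) →
      ev (box β α) (P gm gp (h d + mp T (h d))) = 0 := by
    by_cases hev : d = 2 * (t - 1)
    · have ht1 : t - 1 + 1 = t := by omega
      have hdd : t - 1 + (t - 1) = d := by omega
      obtain ⟨δ, h1, h2, h3⟩ := Blem F (t - 1) (t - 1) (by omega) (by omega) (by omega) ε hε
      refine ⟨δ, h1, h2, ?_⟩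
      intro h W _ α β hα hβ cβ cα
      have := h3 h W α β (by rwa [ht1]) (by rwa [ht1]) cβ
        (fun l hl => cα l (Sm_mono (Set.subset_univ _) le_rfl hl))
        (fun l hl => cα l (Sm_mono (Set.subset_univ _) le_rfl hl))
      rwa [hdd] at this
    · exact ⟨ε, hε, le_rfl, fun _ _ h => absurd h hev⟩
  obtain ⟨h, W⟩ := exists_tow F d le_rfl δ hδ
  replace hB := hB h W
  have zS : ∀ j ≤ d, h j ∈ Sup (Sm (Set.univ : Set X) ε) := fun j hj =>
    Sup_mono (Sm_mono (Set.subset_univ _) hle) (W.small j hj)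
  set z := h d + mp T (h d) with hz
  have zs : z ∈ Sup (Sm (Set.univ : Set X) ε) := Submodule.add_mem _ (zS d le_rfl)
    (mp_Sup T (fun _ hl => map_Sm F.iso (fun _ _ => Set.mem_univ _) hl) (zS d le_rfl))
  have zl : z ∈ Sup {l | l.length = d + 1} := W.zlen le_rfl
  have zz := Sup_inter zs zl
  have zT : mp T z = z := by rw [hz, map_add, F.mpmp, add_comm]
  have zD : D z = 0 := cyc F W d le_rfl
  -- maps
  let io : X → X × Bool := fun x => (x, decide (f x < f (T x)))
  have ioT : io ∘ T = TV T ∘ io := by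
    funext x
    have hne := hf x x (by simpa using hε)
    simp only [io, TV, Function.comp, hT, Prod.mk.injEq, true_and]
    rcases lt_or_gt_of_ne hne with h | h
    · simp [h, h.not_gt]
    · simp [h, h.not_gt]
  have gmT : TV T ∘ gp = gm ∘ T := by funext x; simp [TV, gp, gm]
  have fanZ : ∀ c ∈ Sup (Gd (X := X) ε), ev (ThV T f) (D c) =
      ev (ThV T f) c + ev (ThV T f) (mp (TV T) c) := fun c hc => fanV hT f hf hc
  have ioG : ∀ c ∈ Sup (Sm (Set.univ : Set X) ε), mp io c ∈ Sup (Gd (X := X) ε) := by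
    intro c hc
    refine mp_Sup io ?_ hc
    intro l hl
    show (l.map io).map Prod.fst ∈ Sm (Set.univ : Set X) ε
    rw [List.map_map]
    simpa [io, Function.comp_def] using hl
  have one : ∀ k ≤ d, ev (ThV T f) (mp io (h k + mp T (h k))) = 1 := by
    have step : ∀ k ≤ d, ev (ThV T f) (mp io (h k + mp T (h k))) =
        ev (ThV T f) (mp io (D (h k))) := by
      intro k hk
      rw [map_add, mp_mp, ioT, ← mp_mp, map_add, ← fanZ _ (ioG _ (zS k hk)), D_mp]
    intro k
    induction k with
    | zero =>
      intro hk
      rw [step 0 hk, W.zero]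
      simp [bd, ThV, Th, alt]
    | succ k ih =>
      intro hk
      rw [step _ hk, W.bdry k hk, ih (by omega)]
  have one := one d le_rfl
  have prG : ∀ a b : X → X × Bool, (∀ x, (a x).1 = x) → (∀ x, (b x).1 = x) →
      P a b z ∈ Sup (Gd (X := X) ε ∩ {L | L.length = d + 2}) := by
    intro a b ha hb
    refine Sup_map ?_ zz
    rintro l ⟨hl, hl2⟩
    rw [P_single]
    refine Sup_mono ?_ (pr_Sup a b l)
    rintro L ⟨h1, h2⟩
    refine ⟨Sm_sub ?_ hl, ?_⟩
    · intro x hx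
      simp only [List.mem_map] at hx
      obtain ⟨v, hv, rfl⟩ := hx
      obtain ⟨y, hy, rfl | rfl⟩ := h2 v hv
      · rwa [ha]
      · rwa [hb]
    · have : l.length = d + 1 := hl2
      show L.length = d + 2
      omega
  have rrG : R io gm gp z ∈ Sup (Gd (X := X) ε ∩ {L | L.length = d + 3}) := by
    refine Sup_map ?_ zz
    rintro l ⟨hl, hl2⟩
    rw [R_single]
    refine Sup_mono ?_ (rr_Sup io gm gp l)
    rintro L ⟨h1, h2⟩
    refine ⟨Sm_sub ?_ hl, ?_⟩
    · intro x hx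
      simp only [List.mem_map] at hx
      obtain ⟨v, hv, rfl⟩ := hx
      obtain ⟨y, hy, rfl | rfl | rfl⟩ := h2 v hv
      · exact hy
      · exact hy
      · exact hy
    · have : l.length = d + 1 := hl2
      show L.length = d + 3
      omega
  have TVG : ∀ n, ∀ L ∈ (Gd (X := X) ε ∩ {L | L.length = n}), L.map (TV T) ∈
      (Gd (X := X) ε ∩ {L | L.length = n}) := by
    rintro n L ⟨h1, h2⟩
    refine ⟨?_, by simpa using h2⟩
    have e : (L.map (TV T)).map Prod.fst = (L.map Prod.fst).map T := by
      simp [TV, Function.comp_def]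
    show (L.map (TV T)).map Prod.fst ∈ Sm (Set.univ : Set X) ε
    rw [e]
    exact map_Sm F.iso (fun _ _ => Set.mem_univ _) h1
  have big : ∀ n, 2 * t < n → ∀ c ∈ Sup (Gd (X := X) ε ∩ {L | L.length = n}),
      ev (ThV T f) c = 0 := by
    intro n hn c hc
    have := Sup_eq (F := ev (ThV T f)) (F' := 0) ?_ hc
    · simpa using this
    rintro L ⟨h1, h2⟩
    simp only [ev_single, LinearMap.zero_apply]
    refine Th_big _ t (hsel L h1) ?_
    have : L.length = n := h2
    simpa [this] using hn
  have ig := prG io gp (fun _ => rfl) (fun _ => rfl)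
  have eq1 : (1 : ZMod 2) = ev (ThV T f) (P io gp z) + ev (ThV T f) (mp (TV T) (P io gp z)) := by
    rw [← fanZ _ (Sup_mono Set.inter_subset_left ig), D_P, zD, map_zero, zero_add, map_add, one]
    have : ev (ThV T f) (mp gp z) = 0 := by
      have := Sup_eq (F := ev (ThV T f) ∘ₗ mp gp) (F' := 0) ?_ zl
      · simpa using this
      intro l hl
      have hl' : l.length = d + 1 := hl
      simp only [LinearMap.comp_apply, mp_single, ev_single, LinearMap.zero_apply]
      refine Th_plus _ ?_ ?_
      · intro v hv
        simp only [List.mem_map] at hv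
        obtain ⟨w, ⟨x, _, rfl⟩, rfl⟩ := hv
        rfl
      · simp; omega
    rw [this, add_zero]
  rcases Nat.even_or_odd d with he | ho
  swap
  · have : 2 * t < d + 2 := by rcases ho with ⟨k, hk⟩; omega
    rw [big _ this _ ig, big _ this _ (mp_Sup _ (TVG _) ig)] at eq1
    simp at eq1
  have hev : d = 2 * (t - 1) := by rcases he with ⟨k, hk⟩; omega
  have eq2 : mp (TV T) (P io gp z) = P io gm z := by
    rw [mp_P, ← ioT, gmT, ← P_mp, zT]
  have h3 : 2 * t < d + 3 := by omega
  have eq3 := fanZ _ (Sup_mono Set.inter_subset_left rrG)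
  rw [big _ h3 _ rrG, big _ h3 _ (mp_Sup _ (TVG _) rrG), D_R, zD, map_zero, zero_add,
    map_add, map_add] at eq3
  rw [eq2] at eq1
  have eq4 : ev (ThV T f) (P gm gp z) = 1 := by
    have := z2_two (1 : ZMod 2)
    linear_combination eq3 + eq1 - this
  -- expansion
  have gG := prG gm gp (fun _ => rfl) (fun _ => rfl)
  have eq5 : ev (ThV T f) (P gm gp z) = ∑ Q ∈ Finset.powersetCard t (Finset.univ : Finset ι),
      ∑ N ∈ Finset.powersetCard t (Finset.univ : Finset ι),
        Th true (Q.toList.map (fun i => (i, true)) ++ N.toList.map (fun i => (i, false))) *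
          ev (box (fun l => chi N (l.map (f ∘ T))) (fun l => chi Q (l.map f))) (P gm gp z) := by
    simp only [← ev_mul, ← ev_sum]
    refine Sup_eq ?_ gG
    rintro L ⟨h1, h2⟩
    have h2 : L.length = d + 2 := h2
    simp only [ev_single]
    unfold ThV
    rw [Th_expand _ t (hsel L h1) (by simp; omega)]
    simp only [sel_lab_t, sel_lab_f, box]
  rw [eq4] at eq5
  rw [Finset.sum_eq_zero] at eq5
  · simp at eq5
  intro Q hQ
  refine Finset.sum_eq_zero fun N hN => ?_
  rw [Finset.mem_powersetCard] at hQ hN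
  rw [hB hev, mul_zero]
  · intro l hl
    exact chi_len _ _ (by simpa [hQ.2] using hl)
  · intro l hl
    exact chi_len _ _ (by simpa [hN.2] using hl)
  · intro l hl
    have := chi_cocycle N t hN.2 (l.map (f ∘ T)) (by convert hcardT l hl)
    rwa [← mp_bd, ev_mp] at this
  · intro l hl
    have := chi_cocycle Q t hQ.2 (l.map f) (by convert hcard l hl)
    rwa [← mp_bd, ev_mp] at this

end Final

section Sphere

abbrev Sph (d : ℕ) := Metric.sphere (0 : EuclideanSpace ℝ (Fin (d + 1))) 1

/-- The closed `k`-dimensional hemispheres. -/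
def Hem (d k : ℕ) : Set (Sph d) :=
  {x | (∀ i : Fin (d + 1), k < i.val → x.1 i = 0) ∧ ∀ i : Fin (d + 1), i.val = k → 0 ≤ x.1 i}

theorem Hem_closed (d k : ℕ) : IsClosed (Hem d k) := by
  have hc : ∀ i : Fin (d + 1), Continuous fun x : Sph d => x.1 i := by
    intro i; fun_prop
  have : Hem d k = (⋂ i : Fin (d + 1), ⋂ _ : k < i.val, {x : Sph d | x.1 i = 0}) ∩
      ⋂ i : Fin (d + 1), ⋂ _ : i.val = k, {x : Sph d | 0 ≤ x.1 i} := by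
    ext x; simp [Hem]
  rw [this]
  refine IsClosed.inter ?_ ?_
  · exact isClosed_iInter fun i => isClosed_iInter fun _ => isClosed_eq (hc i) continuous_const
  · exact isClosed_iInter fun i => isClosed_iInter fun _ => isClosed_le continuous_const (hc i)

theorem Hem_ctr (d k : ℕ) (hk : k ≤ d) : Ctr (Hem d k) := by
  classical
  set kk : Fin (d + 1) := ⟨k, by omega⟩ with hkk
  let e : EuclideanSpace ℝ (Fin (d + 1)) := EuclideanSpace.single kk 1
  have he : ‖e‖ = 1 := by simp [e]
  let g : ℝ → Sph d → EuclideanSpace ℝ (Fin (d + 1)) := fun s x => (1 - s) • x.1 + s • e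
  let Φ : ℝ → Sph d → EuclideanSpace ℝ (Fin (d + 1)) := fun s x => ‖g s x‖⁻¹ • g s x
  have xn : ∀ x : Sph d, ‖x.1‖ = 1 := fun x => by simpa using x.2
  have gi : ∀ s x i, g s x i = (1 - s) * x.1 i + s * (if i = kk then 1 else 0) := by
    intro s x i
    simp [g, e, EuclideanSpace.single_apply]
  have gk : ∀ s ∈ Set.Icc (0 : ℝ) 1, ∀ x ∈ Hem d k, 0 ≤ g s x kk := by
    intro s hs x hx
    rw [gi, if_pos rfl, mul_one]
    have := hx.2 kk rfl
    have := mul_nonneg (sub_nonneg.2 hs.2) this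
    linarith [hs.1]
  have g0 : ∀ s ∈ Set.Icc (0 : ℝ) 1, ∀ x ∈ Hem d k, g s x ≠ 0 := by
    intro s hs x hx h0
    have h1 : g s x kk = 0 := by rw [h0]; rfl
    rw [gi, if_pos rfl, mul_one] at h1
    have := mul_nonneg (sub_nonneg.2 hs.2) (hx.2 kk rfl)
    have hs0 : s = 0 := by linarith [hs.1]
    have h2 : g s x = x.1 := by simp [g, hs0]
    have h3 := xn x
    rw [← h2, h0] at h3
    simp at h3
  have Φn : ∀ s ∈ Set.Icc (0 : ℝ) 1, ∀ x ∈ Hem d k, Φ s x ∈ Metric.sphere (0 : EuclideanSpace ℝ (Fin (d + 1))) 1 := by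
    intro s hs x hx
    have := norm_ne_zero_iff.2 (g0 s hs x hx)
    simp only [Φ, mem_sphere_zero_iff_norm, norm_smul, norm_inv, norm_norm]
    exact inv_mul_cancel₀ this
  let ρ : ℝ → Sph d → Sph d := fun s x =>
    if h : Φ s x ∈ Metric.sphere (0 : EuclideanSpace ℝ (Fin (d + 1))) 1 then ⟨Φ s x, h⟩ else x
  have ρΦ : ∀ s ∈ Set.Icc (0 : ℝ) 1, ∀ x ∈ Hem d k, (ρ s x).1 = Φ s x := by
    intro s hs x hx
    simp only [ρ, dif_pos (Φn s hs x hx)]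
  have e01 : (0 : ℝ) ∈ Set.Icc (0 : ℝ) 1 := by simp
  have e11 : (1 : ℝ) ∈ Set.Icc (0 : ℝ) 1 := by simp
  refine Ctr_of_homotopy (Hem d k) ρ ⟨e, by simp [he]⟩ ?_ ?_ ?_ ?_ ?_
  · refine ⟨?_, ?_⟩
    · intro i hi
      have : i ≠ kk := by rintro rfl; simp [hkk] at hi
      simp [e, this]
    · intro i hi
      have : i = kk := Fin.ext hi
      simp [e, this]
  · intro x hx
    apply Subtype.ext
    rw [ρΦ 0 e01 x hx]
    simp [Φ, g, xn]
  · intro x hx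
    apply Subtype.ext
    rw [ρΦ 1 e11 x hx]
    simp [Φ, g, he]
  · intro s hs x hx
    refine ⟨?_, ?_⟩
    · intro i hi
      rw [ρΦ s hs x hx]
      have : i ≠ kk := by rintro rfl; simp [hkk] at hi
      have h2 : g s x i = 0 := by rw [gi, hx.1 i hi, if_neg this]; ring
      show ‖g s x‖⁻¹ * g s x i = 0
      rw [h2, mul_zero]
    · intro i hi
      have : i = kk := Fin.ext hi
      rw [ρΦ s hs x hx, this]
      show 0 ≤ ‖g s x‖⁻¹ * g s x kk
      exact mul_nonneg (by positivity) (gk s hs x hx)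
  · have hcomp : IsCompact (Set.Icc (0 : ℝ) 1 ×ˢ Hem d k) :=
      isCompact_Icc.prod (Hem_closed d k).isCompact
    have hgc : Continuous fun q : ℝ × Sph d => g q.1 q.2 := by
      simp only [g]; fun_prop
    have hcont : ContinuousOn (fun q : ℝ × Sph d => Φ q.1 q.2) (Set.Icc (0 : ℝ) 1 ×ˢ Hem d k) := by
      refine ContinuousOn.smul (ContinuousOn.inv₀ hgc.norm.continuousOn ?_) hgc.continuousOn
      rintro ⟨s, x⟩ ⟨hs, hx⟩
      exact norm_ne_zero_iff.2 (g0 s hs x hx)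
    have hu := hcomp.uniformContinuousOn_of_continuous hcont
    rw [Metric.uniformContinuousOn_iff] at hu
    intro ε hε
    obtain ⟨δ, hδ, h⟩ := hu ε hε
    refine ⟨δ, hδ, ?_⟩
    intro s hs s' hs' x hx y hy h1 h2
    have := h (s, x) ⟨hs, hx⟩ (s', y) ⟨hs', hy⟩ (by
      rw [Prod.dist_eq]; exact max_lt (by simpa [Real.dist_eq] using h1) h2)
    rw [Subtype.dist_eq, ρΦ s hs x hx, ρΦ s' hs' y hy]
    exact this

theorem Hem_filt (d : ℕ) : Filt (X := Sph d) (fun x => -x) (Hem d)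
    ⟨EuclideanSpace.single 0 1, by simp⟩ d where
  inv x := neg_neg x
  iso x y := by
    rw [Subtype.dist_eq, Subtype.dist_eq]
    exact dist_neg_neg _ _
  base := by
    refine ⟨?_, ?_⟩
    · intro i hi
      have : i ≠ 0 := by rintro rfl; simp at hi
      simp [this]
    · intro i hi
      have : i = 0 := Fin.ext hi
      simp [this]
  sub j _ x hx := ⟨fun i hi => hx.1 i (by omega), fun i hi => (hx.1 i (by omega)).ge⟩
  subT j _ x hx := by
    have e : ∀ i, (-x).1 i = - x.1 i := fun i => rfl
    exact ⟨fun i hi => by rw [e, hx.1 i (by omega), neg_zero],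
      fun i hi => by rw [e, hx.1 i (by omega), neg_zero]⟩
  ctr j hj := Hem_ctr d j hj

theorem sphere_main (d m : ℕ) (hd : 1 ≤ d) (A : Fin m → Set (EuclideanSpace ℝ (Fin (d + 1))))
    (hclosed : ∀ i, IsClosed (A i))
    (hdisj : ∀ i x, x ∈ A i → -x ∉ A i)
    (hcover : ∀ x ∈ Metric.sphere (0 : EuclideanSpace ℝ (Fin (d + 1))) 1, ∃ i, x ∈ A i) :
    ∃ S : Finset (Fin m), S.card = (d + 4) / 2 ∧ ∃ x, ∀ i ∈ S, x ∈ A i := by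
  classical
  by_contra! hcon
  choose f hf using fun x : Sph d => hcover x.1 x.2
  have hcl : ∀ i, IsClosed {x : Sph d | x.1 ∈ A i} := fun i =>
    (hclosed i).preimage continuous_subtype_val
  have hcl2 : ∀ i, IsClosed {x : Sph d | -x.1 ∈ A i} := fun i =>
    (hclosed i).preimage continuous_subtype_val.neg
  let U : Sph d → Set (Sph d) := fun w =>
    (⋂ i : Fin m, ⋂ _ : w.1 ∉ A i, {x : Sph d | x.1 ∈ A i}ᶜ) ∩
    ⋂ i : Fin m, ⋂ _ : -w.1 ∉ A i, {x : Sph d | -x.1 ∈ A i}ᶜ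
  have hU : ∀ w, IsOpen (U w) := fun w => by
    refine IsOpen.inter ?_ ?_
    · exact isOpen_iInter_of_finite fun i => isOpen_iInter_of_finite fun _ => (hcl i).isOpen_compl
    · exact isOpen_iInter_of_finite fun i => isOpen_iInter_of_finite fun _ => (hcl2 i).isOpen_compl
  have hcov : (Set.univ : Set (Sph d)) ⊆ ⋃ w, U w := by
    intro w _
    exact Set.mem_iUnion.2 ⟨w, by simp [U]⟩
  obtain ⟨ε, hε, hL⟩ := lebesgue_number_lemma_of_metric isCompact_univ hU hcov
  have key : ∀ y : Sph d, ∃ w : Sph d, ∀ z : Sph d, dist z y < ε →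
      (∀ i, z.1 ∈ A i → w.1 ∈ A i) ∧ (∀ i, -z.1 ∈ A i → -w.1 ∈ A i) := by
    intro y
    obtain ⟨w, hw⟩ := hL y (Set.mem_univ _)
    refine ⟨w, fun z hz => ?_⟩
    have hz := hw (Metric.mem_ball.2 hz)
    simp only [U, Set.mem_inter_iff, Set.mem_iInter, Set.mem_compl_iff] at hz
    refine ⟨fun i hi => ?_, fun i hi => ?_⟩
    · by_contra h; exact hz.1 i h hi
    · by_contra h; exact hz.2 i h hi
  refine core hd (Hem_filt d) f hε ?_ ?_
  · intro x y hxy heq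
    obtain ⟨w, hw⟩ := key y
    have h1 := (hw x hxy).1 _ (hf x)
    have h2 := (hw y (by simpa using hε)).2 _ (hf (-y))
    rw [heq] at h1
    exact hdisj _ _ h1 h2
  · intro l hl
    cases l with
    | nil => exact ⟨∅, by simp, by simp⟩
    | cons y l =>
      obtain ⟨w, hw⟩ := key y
      refine ⟨Finset.univ.filter fun i => w.1 ∈ A i, ?_, ?_⟩
      · by_contra! hlt
        have : (d + 4) / 2 ≤ (Finset.univ.filter fun i => w.1 ∈ A i).card := by omega
        obtain ⟨S, hS, hc⟩ := Finset.exists_subset_card_eq this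
        obtain ⟨i, hi, hi'⟩ := hcon S hc w.1
        exact hi' (by simpa using hS hi)
      · intro x hx
        simp only [Finset.mem_filter, Finset.mem_univ, true_and]
        exact (hw x ((hl x hx).2 y (by simp))).1 _ (hf x)

end Sphere

end LLS

open Pointwise

/-- Local Lusternik–Schnirelman theorem: if closed sets `A₁,…,A_m ⊆ S^d` (`d ≥ 1`) satisfy
`A_i ∩ (-A_i) = ∅` and cover `S^d` by themselves, then some `⌈(d+3)/2⌉` of them have a
common point. -/
theorem stmt5 (d m : ℕ) (hd : 1 ≤ d)
    (A : Fin m → Set (EuclideanSpace ℝ (Fin (d + 1))))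
    (hclosed : ∀ i, IsClosed (A i))
    (hsub : ∀ i, A i ⊆ Metric.sphere (0 : EuclideanSpace ℝ (Fin (d + 1))) 1)
    (hdisj : ∀ i, A i ∩ (-A i) = ∅)
    (hcover : Metric.sphere (0 : EuclideanSpace ℝ (Fin (d + 1))) 1 ⊆ ⋃ i, A i) :
    ∃ S : Finset (Fin m), S.card = (d + 4) / 2 ∧ (⋂ i ∈ S, A i).Nonempty := by
  obtain ⟨S, hS, x, hx⟩ := LLS.sphere_main d m hd A hclosed
    (fun i x h1 h2 => by
      have h3 : x ∈ A i ∩ (-A i) := ⟨h1, h2⟩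
      rw [hdisj i] at h3
      exact h3)
    (fun x hx => Set.mem_iUnion.1 (hcover hx))
  exact ⟨S, hS, x, Set.mem_iInter₂.2 hx⟩
end

section
/- Any covering of S^d by closed sets A₁, ..., A_m such that no A_i contains a pair of antipodal points (A_i ∩ (-A_i) = ∅ for all i) must use at least d+2 sets, i.e., m ≥ d+2. (Lusternik–Schnirelman theorem) -/
open Pointwise

namespace LS
open Finset

open Classical in
theorem label_count {β : Type*} [DecidableEq β] (T : Finset ℕ) (l : ℕ → β) (J : Finset β)
    (hc : T.card = J.card + 1) :
    (∑ i ∈ T, if (T.erase i).image l = J then (1 : ZMod 2) else 0)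
      = if ∃ j, j ∉ J ∧ T.image l = insert j J then 1 else 0 := by
  by_cases h : ∃ j, j ∉ J ∧ T.image l = insert j J
  · rw [if_pos h]
    obtain ⟨j, hj, him⟩ := h
    have hinj : Set.InjOn l T := by
      apply Finset.card_image_iff.mp
      rw [him, Finset.card_insert_of_notMem hj, hc]
    have hjm : j ∈ T.image l := by rw [him]; exact Finset.mem_insert_self _ _
    obtain ⟨i0, hi0, rfl⟩ := Finset.mem_image.mp hjm
    rw [Finset.sum_eq_single_of_mem i0 hi0]
    · rw [if_pos]
      ext b
      constructor
      · intro hb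
        obtain ⟨t, ht, rfl⟩ := Finset.mem_image.mp hb
        obtain ⟨ht1, ht2⟩ := Finset.mem_erase.mp ht
        have : l t ∈ insert (l i0) J := by rw [← him]; exact Finset.mem_image_of_mem _ ht2
        rcases Finset.mem_insert.mp this with h | h
        · exact absurd (hinj ht2 hi0 h) ht1
        · exact h
      · intro hb
        have : b ∈ T.image l := by rw [him]; exact Finset.mem_insert_of_mem hb
        obtain ⟨t, ht, rfl⟩ := Finset.mem_image.mp this
        refine Finset.mem_image_of_mem _ (Finset.mem_erase.mpr ⟨?_, ht⟩)
        rintro rfl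
        exact hj hb
    · intro i hi hne
      rw [if_neg]
      intro h
      apply hj
      rw [← h]
      exact Finset.mem_image_of_mem _ (Finset.mem_erase.mpr ⟨hne.symm, hi0⟩)
  · rw [if_neg h]
    by_cases hex : ∃ i ∈ T, (T.erase i).image l = J
    · obtain ⟨i, hi, him⟩ := hex
      have hT : T.image l = insert (l i) J := by
        rw [← him, ← Finset.image_insert, Finset.insert_erase hi]
      have hiJ : l i ∈ J := by
        by_contra hn
        exact h ⟨_, hn, hT⟩
      have hinj : Set.InjOn l (T.erase i : Finset ℕ) := by
        apply Finset.card_image_iff.mp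
        rw [him, Finset.card_erase_of_mem hi, hc]; simp
      rw [← him] at hiJ
      obtain ⟨i', hi', he⟩ := Finset.mem_image.mp hiJ
      obtain ⟨hne, hi'T⟩ := Finset.mem_erase.mp hi'
      rw [← Finset.sum_subset (s₁ := {i, i'})]
      · rw [Finset.sum_pair hne.symm, if_pos him, if_pos]
        · decide
        · rw [← him]
          ext b
          simp only [Finset.mem_image, Finset.mem_erase]
          constructor
          · rintro ⟨t, ⟨h1, h2⟩, rfl⟩
            by_cases hti : t = i
            · subst hti; exact ⟨i', ⟨hne, hi'T⟩, he⟩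
            · exact ⟨t, ⟨hti, h2⟩, rfl⟩
          · rintro ⟨t, ⟨h1, h2⟩, rfl⟩
            by_cases hti : t = i'
            · subst hti; exact ⟨i, ⟨hne.symm, hi⟩, he.symm⟩
            · exact ⟨t, ⟨hti, h2⟩, rfl⟩
      · intro t ht
        simp only [Finset.mem_insert, Finset.mem_singleton] at ht
        rcases ht with rfl | rfl <;> assumption
      · intro t ht htn
        simp only [Finset.mem_insert, Finset.mem_singleton, not_or] at htn
        rw [if_neg]
        intro h'
        have hti : t ∈ T.erase i := Finset.mem_erase.mpr ⟨htn.1, ht⟩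
        have : l t ∈ J := by rw [← him]; exact Finset.mem_image_of_mem _ hti
        rw [← h'] at this
        obtain ⟨u, hu, hul⟩ := Finset.mem_image.mp this
        obtain ⟨hut, huT⟩ := Finset.mem_erase.mp hu
        by_cases hui : u = i
        · subst hui
          exact htn.2 (hinj hti hi' (hul.symm.trans he.symm))
        · exact hut (hinj (Finset.mem_coe.mpr (Finset.mem_erase.mpr ⟨hui, huT⟩)) hti hul)
    · apply Finset.sum_eq_zero
      intro i hi
      rw [if_neg]
      intro h'
      exact hex ⟨i, hi, h'⟩

/-- A signed coordinate direction. -/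
abbrev SC (d : ℕ) := Fin d × Bool

/-- A signed coordinate direction with an absolute value. -/
abbrev X (d M : ℕ) := Fin d × Bool × Fin (M + 1)

def neg {d : ℕ} (a : SC d) : SC d := (a.1, !a.2)

def sg (b : Bool) : ℤ := if b then 1 else -1

def term {d M : ℕ} (a : X d M) (b : Prop) [Decidable b] : Fin d → ℤ :=
  Pi.single a.1 (sg a.2.1 * ((a.2.2 : ℕ) + if b then 1 else 0))

def vert {d M k : ℕ} (f : Fin k → X d M) (i : ℕ) : Fin d → ℤ :=
  ∑ j : Fin k, term (f j) ((j : ℕ) < i)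

def dirs {d M k : ℕ} (f : Fin k → X d M) : Finset (SC d) :=
  Finset.univ.image (fun j => ((f j).1, (f j).2.1))

def inj {d M k : ℕ} (f : Fin k → X d M) : Prop := Function.Injective (fun j => (f j).1)

theorem vert_apply {d M k : ℕ} (f : Fin k → X d M) (hf : inj f) (i : ℕ) (j : Fin k) :
    vert f i (f j).1 = sg (f j).2.1 * (((f j).2.2 : ℕ) + if (j : ℕ) < i then 1 else 0) := by
  unfold vert
  rw [Finset.sum_apply, Finset.sum_eq_single j]
  · simp [term]
  · intro b _ hb
    unfold term
    rw [Pi.single_eq_of_ne]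
    intro h
    exact hb (hf h.symm)
  · simp

theorem vert_apply_ne {d M k : ℕ} (f : Fin k → X d M) (i : ℕ) (c : Fin d)
    (hc : ∀ j, (f j).1 ≠ c) : vert f i c = 0 := by
  unfold vert
  rw [Finset.sum_apply]
  apply Finset.sum_eq_zero
  intro j _
  unfold term
  rw [Pi.single_eq_of_ne]
  exact (hc j).symm

theorem abs_sg_mul (b : Bool) (z : ℤ) : |sg b * z| = |z| := by
  cases b <;> simp [sg]

theorem vert_bound {d M k : ℕ} (f : Fin k → X d M) (hf : inj f) (i : ℕ) (c : Fin d) :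
    |vert f i c| ≤ M + 1 := by
  by_cases h : ∃ j, (f j).1 = c
  · obtain ⟨j, rfl⟩ := h
    rw [vert_apply f hf, abs_sg_mul, abs_le]
    have := (f j).2.2.isLt
    split_ifs <;> constructor <;> omega
  · push Not at h
    rw [vert_apply_ne f i c h]
    simp; omega

theorem vert_close {d M k : ℕ} (f : Fin k → X d M) (hf : inj f) (i i' : ℕ) (c : Fin d) :
    |vert f i c - vert f i' c| ≤ 1 := by
  by_cases h : ∃ j, (f j).1 = c
  · obtain ⟨j, rfl⟩ := h
    rw [vert_apply f hf, vert_apply f hf, ← mul_sub, abs_sg_mul, abs_le]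
    split_ifs <;> constructor <;> omega
  · push Not at h
    rw [vert_apply_ne f i c h, vert_apply_ne f i' c h]
    simp

theorem card_dirs {d M k : ℕ} (f : Fin k → X d M) (hf : inj f) : (dirs f).card = k := by
  unfold dirs
  rw [Finset.card_image_of_injective, Finset.card_univ, Fintype.card_fin]
  intro a b h
  exact hf (Prod.ext_iff.mp h).1

section
variable {d M : ℕ} (L : (Fin d → ℤ) → SC d)

open Classical in
noncomputable def F {k : ℕ} (f : Fin k → X d M) (i : ℕ) : ZMod 2 :=
  if inj f ∧ ((range (k + 1)).erase i).image (fun j => L (vert f j)) = dirs f then 1 else 0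

open Classical in
noncomputable def Q {k : ℕ} (f : Fin k → X d M) : ZMod 2 :=
  if inj f ∧ ∃ j, j ∉ dirs f ∧
    (range (k + 1)).image (fun j => L (vert f j)) = insert j (dirs f) then 1 else 0

theorem sum_F {k : ℕ} (f : Fin k → X d M) : ∑ i ∈ range (k + 1), F L f i = Q L f := by
  unfold F Q
  by_cases hf : inj f
  · have := label_count (range (k + 1)) (fun j => L (vert f j)) (dirs f)
      (by rw [card_dirs f hf, card_range])
    simp only [hf, true_and]
    convert this
  · simp [hf]

theorem F_congr {k : ℕ} (f f' : Fin k → X d M) (i i' : ℕ) (h1 : inj f ↔ inj f')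
    (h2 : ((range (k + 1)).erase i).image (fun j => L (vert f j)) =
      ((range (k + 1)).erase i').image (fun j => L (vert f' j)))
    (h3 : dirs f = dirs f') : F L f i = F L f' i' := by
  unfold F
  rw [h2, h3]
  congr 1
  rw [h1]

theorem inj_comp {k : ℕ} (f : Fin k → X d M) (e : Equiv.Perm (Fin k)) :
    inj (f ∘ e) ↔ inj f := by
  unfold inj
  exact Function.Injective.of_comp_iff' (fun j => (f j).1) e.bijective

theorem dirs_comp {k : ℕ} (f : Fin k → X d M) (e : Equiv.Perm (Fin k)) :
    dirs (f ∘ e) = dirs f := by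
  unfold dirs
  ext b
  simp only [mem_image, mem_univ, true_and, Function.comp]
  exact e.surjective.exists (p := fun j => ((f j).1, (f j).2.1) = b) |>.symm

theorem vert_comp {k : ℕ} (f : Fin k → X d M) (e : Equiv.Perm (Fin k)) (i : ℕ)
    (h : ∀ j, ((e j : Fin k) : ℕ) < i ↔ (j : ℕ) < i) : vert (f ∘ e) i = vert f i := by
  unfold vert
  rw [← Equiv.sum_comp e (fun j => term (f j) ((j : ℕ) < i))]
  apply Finset.sum_congr rfl
  intro j _
  simp only [Function.comp, term, h]

/-- interior facets cancel -/
theorem sum_mid {k : ℕ} (i : ℕ) (hi : i + 1 < k) :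
    ∑ f : Fin k → X d M, F L f (i + 1) = 0 := by
  let e : Equiv.Perm (Fin k) := Equiv.swap ⟨i, by omega⟩ ⟨i + 1, hi⟩
  have key : ∀ f : Fin k → X d M, F L (f ∘ e) (i + 1) = F L f (i + 1) := by
    intro f
    apply F_congr
    · exact inj_comp f e
    · apply Finset.image_congr
      intro j hj
      simp only [coe_erase, Set.mem_sdiff, Set.mem_singleton_iff] at hj
      have hj2 := hj.2
      simp only
      rw [vert_comp]
      intro t
      by_cases h1 : t = ⟨i, by omega⟩
      · subst h1
        simp only [e, Equiv.swap_apply_left]; omega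
      · by_cases h2 : t = ⟨i + 1, hi⟩
        · subst h2
          simp only [e, Equiv.swap_apply_right]; omega
        · simp only [e]
          rw [Equiv.swap_apply_of_ne_of_ne h1 h2]
    · exact dirs_comp f e
  apply Finset.sum_involution (fun f _ => f ∘ e)
  · intro f _
    rw [key]; exact CharTwo.add_self_eq_zero _
  · intro f _ hne heq
    apply hne
    unfold F
    rw [if_neg]
    rintro ⟨hf, -⟩
    have := congrFun heq ⟨i, by omega⟩
    simp only [Function.comp, e, Equiv.swap_apply_left] at this
    have := hf (congrArg Prod.fst this)
    simp at this
  · intro f _; exact mem_univ _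
  · intro f _
    funext j
    simp [e]

theorem dirs_cons_snoc {n : ℕ} (g : Fin n → X d M) (a b : X d M) (h1 : a.1 = b.1)
    (h2 : a.2.1 = b.2.1) :
    dirs (Fin.cons a g : Fin (n + 1) → X d M) = dirs (Fin.snoc g b : Fin (n + 1) → X d M) := by
  unfold dirs
  ext t
  simp only [mem_image, mem_univ, true_and]
  rw [Fin.exists_fin_succ, Fin.exists_fin_succ']
  simp only [Fin.cons_zero, Fin.cons_succ, Fin.snoc_castSucc, Fin.snoc_last, h1, h2]
  tauto

theorem inj_snoc {n : ℕ} (g : Fin n → X d M) (b : X d M) :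
    inj (Fin.snoc g b : Fin (n + 1) → X d M) ↔ inj g ∧ ∀ j, (g j).1 ≠ b.1 := by
  unfold inj
  have : (fun j => ((Fin.snoc g b : Fin (n + 1) → X d M) j).1) =
      (Fin.snoc (fun j => (g j).1) b.1 : Fin (n + 1) → Fin d) := by
    funext j
    refine Fin.lastCases ?_ ?_ j
    · simp
    · intro i; simp
  rw [this, Fin.snoc_injective_iff]
  simp

theorem inj_cons {n : ℕ} (g : Fin n → X d M) (b : X d M) :
    inj (Fin.cons b g : Fin (n + 1) → X d M) ↔ inj g ∧ ∀ j, (g j).1 ≠ b.1 := by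
  unfold inj
  have : (fun j => ((Fin.cons b g : Fin (n + 1) → X d M) j).1) =
      (Fin.cons b.1 (fun j => (g j).1) : Fin (n + 1) → Fin d) := by
    funext j
    refine Fin.cases ?_ ?_ j
    · simp
    · intro i; simp
  rw [this, Fin.cons_injective_iff]
  simp [and_comm]

theorem vert_cons {n : ℕ} (g : Fin n → X d M) (a : X d M) (i : ℕ) :
    vert (Fin.cons a g : Fin (n + 1) → X d M) (i + 1) = term a True + vert g i := by
  unfold vert
  rw [Fin.sum_univ_succ]
  simp [term]

theorem vert_snoc {n : ℕ} (g : Fin n → X d M) (a : X d M) (i : ℕ) (hi : i ≤ n) :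
    vert (Fin.snoc g a : Fin (n + 1) → X d M) i = vert g i + term a False := by
  unfold vert
  rw [Fin.sum_univ_castSucc]
  simp [term, not_lt.mpr hi]

theorem image_erase_zero {β : Type*} [DecidableEq β] (n : ℕ) (l : ℕ → β) :
    ((range (n + 1)).erase 0).image l = (range n).image (fun j => l (j + 1)) := by
  ext b
  simp only [mem_image, mem_erase, mem_range]
  constructor
  · rintro ⟨t, ⟨h1, h2⟩, rfl⟩
    exact ⟨t - 1, by omega, by congr 1; omega⟩
  · rintro ⟨t, h, rfl⟩
    exact ⟨t + 1, ⟨by omega, by omega⟩, rfl⟩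

theorem image_erase_last {β : Type*} [DecidableEq β] (n : ℕ) (l : ℕ → β) :
    ((range (n + 1)).erase n).image l = (range n).image l := by
  congr 1
  ext t
  simp only [mem_erase, mem_range]
  omega

theorem F_shift {n : ℕ} (g : Fin n → X d M) (c : Fin d) (s : Bool) (v : Fin M) :
    F L (Fin.cons (c, s, v.castSucc) g : Fin (n + 1) → X d M) 0 =
      F L (Fin.snoc g (c, s, v.succ) : Fin (n + 1) → X d M) (n + 1) := by
  apply F_congr
  · rw [inj_cons, inj_snoc]
  · rw [image_erase_zero, image_erase_last]
    apply Finset.image_congr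
    intro j hj
    have hj : j < n + 1 := by simpa using hj
    simp only
    rw [vert_cons, vert_snoc _ _ _ (by omega), add_comm]
    simp [term]
  · exact dirs_cons_snoc g _ _ rfl rfl

def flip {k : ℕ} (f : Fin k → X d M) : Fin k → X d M := fun j => ((f j).1, !(f j).2.1, (f j).2.2)

theorem sg_not (b : Bool) : sg (!b) = - sg b := by cases b <;> rfl

theorem vert_flip {k : ℕ} (f : Fin k → X d M) (i : ℕ) : vert (flip f) i = - vert f i := by
  unfold vert
  rw [← Finset.sum_neg_distrib]
  apply Finset.sum_congr rfl
  intro j _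
  simp only [term, flip, sg_not, neg_mul, Pi.single_neg]

theorem neg_neg' (a : SC d) : neg (neg a) = a := by simp [neg]

theorem neg_inj : Function.Injective (neg (d := d)) :=
  Function.LeftInverse.injective (g := neg) neg_neg'

theorem dirs_flip {k : ℕ} (f : Fin k → X d M) : dirs (flip f) = (dirs f).image neg := by
  unfold dirs
  rw [Finset.image_image]
  rfl

theorem F_flip (H1 : ∀ x : Fin d → ℤ, (∀ c, |x c| ≤ M + 1) → (∃ c, |x c| = M + 1) →
      L (-x) = neg (L x)) {n : ℕ} (f : Fin (n + 1) → X d M) (h : (f 0).2.2 = Fin.last M) :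
    F L (flip f) 0 = F L f 0 := by
  unfold F
  have hi : inj (flip f) ↔ inj f := Iff.rfl
  by_cases hf : inj f
  · have : ((range (n + 1 + 1)).erase 0).image (fun j => L (vert (flip f) j)) =
        (((range (n + 1 + 1)).erase 0).image (fun j => L (vert f j))).image neg := by
      rw [Finset.image_image]
      apply Finset.image_congr
      intro j hj
      simp only [coe_erase, Set.mem_sdiff, Set.mem_singleton_iff] at hj
      have hj2 := hj.2
      simp only [Function.comp]
      rw [vert_flip]
      apply H1
      · exact vert_bound f hf j
      · refine ⟨(f 0).1, ?_⟩
        rw [vert_apply f hf, abs_sg_mul, h, if_pos (by simp; omega)]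
        simp
        omega
    congr 1
    rw [hi, this, dirs_flip, (Finset.image_injective neg_inj).eq_iff]
  · rw [if_neg (fun h => hf (hi.mp h.1)), if_neg (fun h => hf h.1)]

theorem sum_outer (H1 : ∀ x : Fin d → ℤ, (∀ c, |x c| ≤ M + 1) → (∃ c, |x c| = M + 1) →
      L (-x) = neg (L x)) {n : ℕ} :
    ∑ p : SC d × (Fin n → X d M),
      F L (Fin.cons (p.1.1, p.1.2, Fin.last M) p.2 : Fin (n + 1) → X d M) 0 = 0 := by
  apply Finset.sum_involution (fun p _ => (neg p.1, flip p.2))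
  · intro p _
    rw [← F_flip L H1 _ (by simp)]
    have : (flip (Fin.cons (p.1.1, p.1.2, Fin.last M) p.2 : Fin (n + 1) → X d M)) =
      Fin.cons ((neg p.1).1, (neg p.1).2, Fin.last M) (flip p.2) := by
      funext j
      refine Fin.cases ?_ ?_ j
      · simp [flip, neg]
      · intro i; simp [flip]
    rw [this]
    exact CharTwo.add_self_eq_zero _
  · intro p _ _ heq
    have := congrArg (fun q => q.1.2) heq
    simp [neg] at this
  · intro p _; exact mem_univ _
  · intro p _
    have : flip (flip p.2) = p.2 := by funext j; simp [flip]
    simp only [neg_neg', this]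

open Classical in
theorem sum_inner (H2 : ∀ x y : Fin d → ℤ, (∀ c, |x c| ≤ M + 1) → (∀ c, |y c| ≤ M + 1) →
      (∀ c, |x c - y c| ≤ 1) → L x ≠ neg (L y)) {n : ℕ} (g : Fin n → X d M) :
    ∑ a : SC d, F L (Fin.snoc g (a.1, a.2, 0) : Fin (n + 1) → X d M) (n + 1) = Q L g := by
  have hF : ∀ a : SC d, F L (Fin.snoc g (a.1, a.2, 0) : Fin (n + 1) → X d M) (n + 1) =
      if inj g ∧ (∀ j, (g j).1 ≠ a.1) ∧
        (range (n + 1)).image (fun j => L (vert g j)) = insert a (dirs g) then 1 else 0 := by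
    intro a
    unfold F
    rw [inj_snoc, image_erase_last]
    have h1 : (range (n + 1)).image (fun j => L (vert (Fin.snoc g (a.1, a.2, 0) : Fin (n + 1) → X d M) j)) =
        (range (n + 1)).image (fun j => L (vert g j)) := by
      apply Finset.image_congr
      intro j hj
      have hj : j < n + 1 := by simpa using hj
      simp only
      rw [vert_snoc _ _ _ (by omega)]
      simp [term]
    have h2 : dirs (Fin.snoc g (a.1, a.2, 0) : Fin (n + 1) → X d M) = insert a (dirs g) := by
      unfold dirs
      ext t
      simp only [mem_image, mem_univ, true_and, mem_insert]
      rw [Fin.exists_fin_succ']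
      simp only [Fin.snoc_castSucc, Fin.snoc_last]
      rw [or_comm, eq_comm]
    rw [h1, h2]
    simp only [and_assoc]
  simp only [hF]
  unfold Q
  by_cases h : inj g ∧ ∃ j, j ∉ dirs g ∧
    (range (n + 1)).image (fun j => L (vert g j)) = insert j (dirs g)
  · rw [if_pos h]
    obtain ⟨hg, j, hj, him⟩ := h
    rw [Finset.sum_eq_single j]
    · rw [if_pos]
      refine ⟨hg, ?_, him⟩
      intro t ht
      have h1 : j ∈ insert j (dirs g) := mem_insert_self _ _
      have h2 : ((g t).1, (g t).2.1) ∈ dirs g := mem_image_of_mem _ (mem_univ t)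
      have h3 : ((g t).1, (g t).2.1) = neg j := by
        unfold neg
        have : (g t).2.1 ≠ j.2 := by
          intro h
          apply hj
          rwa [ht, h] at h2
        rw [ht]
        congr 1
        revert this
        cases (g t).2.1 <;> cases j.2 <;> simp
      have h4 : neg j ∈ insert j (dirs g) := mem_insert_of_mem (h3 ▸ h2)
      rw [← him] at h1 h4
      obtain ⟨p, hp, hp'⟩ := mem_image.mp h1
      obtain ⟨q, hq, hq'⟩ := mem_image.mp h4
      refine H2 (vert g q) (vert g p) (vert_bound g hg q) (vert_bound g hg p)
        (vert_close g hg q p) ?_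
      rw [hq', hp']
    · intro b _ hb
      rw [if_neg]
      rintro ⟨-, -, h⟩
      rw [him] at h
      have : j ∈ insert b (dirs g) := by rw [← h]; exact mem_insert_self _ _
      rcases mem_insert.mp this with h | h
      · exact hb h.symm
      · exact hj h
    · simp
  · rw [if_neg h]
    apply Finset.sum_eq_zero
    intro a _
    rw [if_neg]
    rintro ⟨hg, hn, him⟩
    refine h ⟨hg, a, ?_, him⟩
    intro ha
    obtain ⟨t, -, ht⟩ := mem_image.mp ha
    exact hn t (congrArg Prod.fst ht)

theorem sum_X {β : Type*} [AddCommMonoid β] (G : X d M → β) :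
    ∑ a, G a = ∑ p : SC d, ∑ v : Fin (M + 1), G (p.1, p.2, v) := by
  rw [Fintype.sum_prod_type, Fintype.sum_prod_type]
  simp_rw [Fintype.sum_prod_type]

theorem step (H1 : ∀ x : Fin d → ℤ, (∀ c, |x c| ≤ M + 1) → (∃ c, |x c| = M + 1) →
      L (-x) = neg (L x))
    (H2 : ∀ x y : Fin d → ℤ, (∀ c, |x c| ≤ M + 1) → (∀ c, |y c| ≤ M + 1) →
      (∀ c, |x c - y c| ≤ 1) → L x ≠ neg (L y)) (n : ℕ) :
    ∑ f : Fin (n + 1) → X d M, Q L f = ∑ g : Fin n → X d M, Q L g := by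
  simp_rw [← sum_F L]
  rw [Finset.sum_comm, Finset.sum_range_succ, Finset.sum_range_succ']
  rw [Finset.sum_eq_zero (s := range n)]
  swap
  · intro i hi
    exact sum_mid L i (by have := mem_range.mp hi; omega)
  rw [zero_add]
  have e0 : ∑ f : Fin (n + 1) → X d M, F L f 0 =
      ∑ g : Fin n → X d M, ∑ p : SC d, ∑ v : Fin M,
        F L (Fin.snoc g (p.1, p.2, v.succ) : Fin (n + 1) → X d M) (n + 1) := by
    rw [← (Fin.consEquiv (fun _ : Fin (n + 1) => X d M)).sum_comp, Fintype.sum_prod_type_right]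
    have : ∀ g : Fin n → X d M, ∑ a : X d M, F L (Fin.consEquiv (fun _ => X d M) (a, g)) 0 =
      ∑ p : SC d, ∑ v : Fin M,
        F L (Fin.snoc g (p.1, p.2, v.succ) : Fin (n + 1) → X d M) (n + 1) +
      ∑ p : SC d, F L (Fin.cons (p.1, p.2, Fin.last M) g : Fin (n + 1) → X d M) 0 := by
      intro g
      rw [sum_X, ← Finset.sum_add_distrib]
      apply Finset.sum_congr rfl
      intro p _
      rw [Fin.sum_univ_castSucc]
      congr 1
      apply Finset.sum_congr rfl
      intro v _
      exact F_shift L g p.1 p.2 v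
    simp_rw [this]
    rw [Finset.sum_add_distrib]
    have ho := sum_outer (M := M) L H1 (n := n)
    rw [Fintype.sum_prod_type_right] at ho
    rw [ho, add_zero]
  have e1 : ∑ f : Fin (n + 1) → X d M, F L f (n + 1) =
      ∑ g : Fin n → X d M, Q L g +
      ∑ g : Fin n → X d M, ∑ p : SC d, ∑ v : Fin M,
        F L (Fin.snoc g (p.1, p.2, v.succ) : Fin (n + 1) → X d M) (n + 1) := by
    rw [← (Fin.snocEquiv (fun _ : Fin (n + 1) => X d M)).sum_comp, Fintype.sum_prod_type_right,
      ← Finset.sum_add_distrib]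
    apply Finset.sum_congr rfl
    intro g _
    rw [sum_X, ← sum_inner L H2, ← Finset.sum_add_distrib]
    apply Finset.sum_congr rfl
    intro p _
    rw [Fin.sum_univ_succ]
    rfl
  rw [e0, e1]
  simp_rw [sum_F L]
  rw [add_comm, add_assoc, CharTwo.add_self_eq_zero, add_zero]

/-- The Tucker lemma on the grid. -/
theorem tucker (H1 : ∀ x : Fin d → ℤ, (∀ c, |x c| ≤ M + 1) → (∃ c, |x c| = M + 1) →
      L (-x) = neg (L x))
    (H2 : ∀ x y : Fin d → ℤ, (∀ c, |x c| ≤ M + 1) → (∀ c, |y c| ≤ M + 1) →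
      (∀ c, |x c - y c| ≤ 1) → L x ≠ neg (L y)) : False := by
  have h : ∀ n, ∑ f : Fin n → X d M, Q L f = 1 := by
    intro n
    induction n with
    | zero =>
      rw [Fintype.sum_unique]
      unfold Q
      rw [if_pos]
      refine ⟨fun a => a.elim0, L (vert (default : Fin 0 → X d M) 0), ?_, ?_⟩
      · simp [dirs]
      · simp [dirs]
    | succ n ih => rw [step L H1 H2, ih]
  have h1 := h d
  have h2 : ∀ g : Fin d → X d M, Q L g = 0 := by
    intro g
    rw [← sum_inner L H2 g]
    apply Finset.sum_eq_zero
    intro a _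
    unfold F
    rw [if_neg]
    rintro ⟨hi, -⟩
    have := Fintype.card_le_of_injective _ hi
    simp at this
  simp [h2] at h1

end
end LS

namespace LS

/-- The map from the cube to the upper hemisphere, before normalisation. -/
noncomputable def psi {d : ℕ} (p : Fin d → ℝ) : EuclideanSpace ℝ (Fin (d + 1)) :=
  WithLp.toLp 2 (Fin.cons (1 - ‖p‖) p)

theorem psi_ne {d : ℕ} (p : Fin d → ℝ) : psi p ≠ 0 := by
  intro h
  have h0 : ∀ i, psi p i = 0 := by intro i; rw [h]; rfl
  have hp : p = 0 := by
    funext i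
    have := h0 i.succ
    simpa [psi] using this
  have := h0 0
  simp [psi, hp] at this

theorem psi_cont {d : ℕ} : Continuous (psi (d := d)) := by
  unfold psi
  refine (PiLp.continuous_toLp 2 _).comp ?_
  refine continuous_pi ?_
  intro i
  refine Fin.cases ?_ ?_ i
  · simp only [Fin.cons_zero]; fun_prop
  · intro j; simp only [Fin.cons_succ]; fun_prop

theorem psi_neg {d : ℕ} (p : Fin d → ℝ) (hp : ‖p‖ = 1) : psi (-p) = -psi p := by
  ext i
  refine Fin.cases ?_ ?_ i
  · simp [psi, hp]
  · intro j; simp [psi]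

noncomputable def phi {d : ℕ} (p : Fin d → ℝ) : EuclideanSpace ℝ (Fin (d + 1)) :=
  ‖psi p‖⁻¹ • psi p

theorem phi_cont {d : ℕ} : Continuous (phi (d := d)) := by
  unfold phi
  refine Continuous.smul (Continuous.inv₀ psi_cont.norm ?_) psi_cont
  intro p
  exact norm_ne_zero_iff.mpr (psi_ne p)

theorem phi_norm {d : ℕ} (p : Fin d → ℝ) : ‖phi p‖ = 1 := by
  unfold phi
  rw [norm_smul, norm_inv, norm_norm, inv_mul_cancel₀ (norm_ne_zero_iff.mpr (psi_ne p))]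

theorem phi_neg {d : ℕ} (p : Fin d → ℝ) (hp : ‖p‖ = 1) : phi (-p) = -phi p := by
  unfold phi
  rw [psi_neg p hp, norm_neg, smul_neg]

/-- Topological Tucker lemma. -/
theorem core {d : ℕ} (B : Fin d → Set (EuclideanSpace ℝ (Fin (d + 1))))
    (hclosed : ∀ i, IsClosed (B i))
    (hsub : ∀ i, B i ⊆ Metric.sphere (0 : EuclideanSpace ℝ (Fin (d + 1))) 1)
    (hdisj : ∀ i x, x ∈ B i → -x ∉ B i)
    (hcover : ∀ x : EuclideanSpace ℝ (Fin (d + 1)), ‖x‖ = 1 → ∃ i, x ∈ B i ∨ -x ∈ B i) :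
    False := by
  classical
  have hne : Nonempty (Fin d) := by
    obtain ⟨i, -⟩ := hcover (phi 0) (phi_norm 0)
    exact ⟨i⟩
  -- separation
  have hsep : ∃ δ : ℝ, 0 < δ ∧ ∀ i, ∀ x ∈ B i, ∀ y, -y ∈ B i → δ ≤ dist x y := by
    have h1 : ∀ i, ∃ δ : ℝ, 0 < δ ∧ ∀ x ∈ B i, ∀ y, -y ∈ B i → δ ≤ dist x y := by
      intro i
      have hc : IsCompact (B i) :=
        (isCompact_sphere (0 : EuclideanSpace ℝ (Fin (d + 1))) 1).of_isClosed_subset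
          (hclosed i) (hsub i)
      have hc2 : IsClosed (-B i) := (hclosed i).neg
      have hd : Disjoint (B i) (-B i) := by
        rw [Set.disjoint_left]
        intro x hx hx'
        exact hdisj i x hx hx'
      obtain ⟨r, hr, h⟩ := Metric.exists_pos_forall_lt_edist hc hc2 hd
      refine ⟨r, by exact_mod_cast hr, fun x hx y hy => ?_⟩
      have := h x hx y hy
      rw [edist_nndist] at this
      have h2 : r < nndist x y := by exact_mod_cast this
      exact le_of_lt (by exact_mod_cast h2)
    choose δ hδ h using h1
    refine ⟨Finset.univ.inf' Finset.univ_nonempty δ, ?_, ?_⟩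
    · rw [Finset.lt_inf'_iff]
      intro i _; exact hδ i
    · intro i x hx y hy
      exact (Finset.inf'_le δ (Finset.mem_univ i)).trans (h i x hx y hy)
  obtain ⟨δ, hδ, hsep⟩ := hsep
  have huc := (isCompact_closedBall (0 : Fin d → ℝ) 1).uniformContinuousOn_of_continuous
    (phi_cont (d := d)).continuousOn
  rw [Metric.uniformContinuousOn_iff] at huc
  obtain ⟨η, hη, huc⟩ := huc δ hδ
  obtain ⟨M, hM⟩ := exists_nat_one_div_lt hη
  -- labels
  let idx : EuclideanSpace ℝ (Fin (d + 1)) → Fin d :=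
    fun x => Classical.epsilon (fun i => x ∈ B i ∨ -x ∈ B i)
  have hidx : ∀ x, ‖x‖ = 1 → x ∈ B (idx x) ∨ -x ∈ B (idx x) := fun x hx =>
    Classical.epsilon_spec (hcover x hx)
  have hidx_neg : ∀ x, idx (-x) = idx x := by
    intro x
    have : (fun i => -x ∈ B i ∨ - -x ∈ B i) = (fun i => x ∈ B i ∨ -x ∈ B i) := by
      funext i
      rw [neg_neg, or_comm]
    simp only [idx]
    rw [this]
  let lab : EuclideanSpace ℝ (Fin (d + 1)) → SC d := fun x => (idx x, decide (x ∈ B (idx x)))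
  let P : (Fin d → ℤ) → (Fin d → ℝ) := fun x c => (x c : ℝ) / (M + 1)
  have hMpos : (0 : ℝ) < M + 1 := by positivity
  have hP : ∀ x : Fin d → ℤ, (∀ c, |x c| ≤ M + 1) → ‖P x‖ ≤ 1 := by
    intro x hx
    rw [pi_norm_le_iff_of_nonneg zero_le_one]
    intro c
    rw [Real.norm_eq_abs, abs_div, abs_of_pos hMpos, div_le_one hMpos]
    exact_mod_cast hx c
  refine tucker (M := M) (fun x => lab (phi (P x))) ?_ ?_
  · intro x hx hx'
    have hn : ‖P x‖ = 1 := by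
      apply le_antisymm (hP x hx)
      obtain ⟨c, hc⟩ := hx'
      refine le_trans ?_ (norm_le_pi_norm (P x) c)
      rw [Real.norm_eq_abs, abs_div, abs_of_pos hMpos, le_div_iff₀ hMpos, one_mul]
      exact_mod_cast hc.ge
    have hPn : P (-x) = - P x := by
      funext c
      simp [P, neg_div]
    rw [hPn, phi_neg _ hn]
    simp only [lab, neg, hidx_neg]
    congr 1
    set y := phi (P x) with hy
    rcases hidx y (phi_norm _) with h | h
    · have := hdisj _ _ h
      simp [h, this]
    · have : y ∉ B (idx y) := fun h' => hdisj _ _ h' h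
      simp [h, this]
  · intro x y hx hy hxy heq
    have hd : dist (P x) (P y) < η := by
      refine lt_of_le_of_lt ?_ hM
      rw [dist_pi_le_iff (by positivity)]
      intro c
      simp only [P]
      rw [Real.dist_eq, ← sub_div, abs_div, abs_of_pos hMpos]
      gcongr
      exact_mod_cast hxy c
    have hd2 := huc (P x) (by simpa using hP x hx) (P y) (by simpa using hP y hy) hd
    simp only [lab, neg, Prod.mk.injEq] at heq
    obtain ⟨h1, h2⟩ := heq
    rw [h1] at h2
    set u := phi (P x)
    set w := phi (P y)
    by_cases hw : w ∈ B (idx w)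
    · have hu : u ∉ B (idx w) := by simpa [hw] using h2
      have := hidx u (phi_norm _)
      rw [h1] at this
      have := hsep _ w hw u (this.resolve_left hu)
      rw [dist_comm] at this
      linarith
    · have hu : u ∈ B (idx w) := by simpa [hw] using h2
      have := hsep _ u hu w ((hidx w (phi_norm _)).resolve_left hw)
      linarith

end LS

/-- Lusternik–Schnirelman theorem: any covering of `S^d` by closed sets `A₁,…,A_m`, none of
which contains a pair of antipodal points, uses at least `d + 2` sets. -/
theorem stmt6 (d m : ℕ)
    (A : Fin m → Set (EuclideanSpace ℝ (Fin (d + 1))))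
    (hclosed : ∀ i, IsClosed (A i))
    (hsub : ∀ i, A i ⊆ Metric.sphere (0 : EuclideanSpace ℝ (Fin (d + 1))) 1)
    (hdisj : ∀ i, A i ∩ (-A i) = ∅)
    (hcover : Metric.sphere (0 : EuclideanSpace ℝ (Fin (d + 1))) 1 ⊆ ⋃ i, A i) :
    d + 2 ≤ m := by
  classical
  by_contra hlt
  have hdj : ∀ i x, x ∈ A i → -x ∉ A i := by
    intro i x hx hx'
    have : x ∈ A i ∩ (-A i) := ⟨hx, hx'⟩
    rw [hdisj] at this
    exact this
  have hcov : ∀ x : EuclideanSpace ℝ (Fin (d + 1)), ‖x‖ = 1 → ∃ i, x ∈ A i := by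
    intro x hx
    have := hcover (show x ∈ Metric.sphere 0 1 by simpa using hx)
    simpa using this
  refine LS.core (d := d) (fun i => if h : (i : ℕ) + 1 < m then A ⟨i, by omega⟩ else ∅) ?_ ?_ ?_ ?_
  · intro i
    split_ifs
    · exact hclosed _
    · exact isClosed_empty
  · intro i
    split_ifs
    · exact hsub _
    · exact Set.empty_subset _
  · intro i x
    split_ifs
    · exact hdj _ x
    · intro h; exact absurd h (Set.notMem_empty _)
  · intro x hx
    obtain ⟨i, hi⟩ := hcov x hx
    obtain ⟨j, hj⟩ := hcov (-x) (by rwa [norm_neg])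
    by_cases h : (i : ℕ) + 1 < m
    · refine ⟨⟨i, by omega⟩, Or.inl ?_⟩
      simp only [h, dif_pos]
      exact hi
    · by_cases h' : (j : ℕ) + 1 < m
      · refine ⟨⟨j, by omega⟩, Or.inr ?_⟩
        simp only [h', dif_pos]
        exact hj
      · have : i = j := by ext; omega
        subst this
        exact absurd hj (hdj _ _ hi)
end

section
/- Let f₁, ..., f_m : S^d → ℝ be continuous odd maps without a common zero. Then there exist a point x₀ ∈ S^d and indices i₁ < i₂ < ... < i_{d+1} such that each f_{i_j}(x₀) has maximal absolute value among |f₁(x₀)|, ..., |f_m(x₀)|, and the signs of f_{i_1}(x₀), ..., f_{i_{d+1}}(x₀) alternate. -/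
namespace FanProof

/-- Mod 2 chains on ordered lists. -/
abbrev Ch (X : Type) := List X →₀ ZMod 2

noncomputable section

variable {X Y : Type}

/-- The elementary chain on a list. -/
def sg (l : List X) : Ch X := Finsupp.single l 1

/-- Extension of a map on lists to a linear map on chains. -/
def lin {V : Type} [AddCommGroup V] [Module (ZMod 2) V] (g : List X → V) : Ch X →ₗ[ZMod 2] V :=
  Finsupp.linearCombination (ZMod 2) g

@[simp] lemma lin_sg {V : Type} [AddCommGroup V] [Module (ZMod 2) V] (g : List X → V) (l : List X) :
    lin g (sg l) = g l := by
  simp [lin, sg]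

lemma lin_ext {V : Type} [AddCommGroup V] [Module (ZMod 2) V] {f g : Ch X →ₗ[ZMod 2] V}
    (h : ∀ l, f (sg l) = g (sg l)) : f = g := by
  apply Finsupp.lhom_ext'
  intro l
  apply LinearMap.ext_ring
  exact h l

/-- Chains supported on a set of lists. -/
def sp (A : Set (List X)) : Submodule (ZMod 2) (Ch X) := Submodule.span (ZMod 2) (sg '' A)

lemma sg_mem {A : Set (List X)} {l : List X} (h : l ∈ A) : sg l ∈ sp A :=
  Submodule.subset_span ⟨l, h, rfl⟩

lemma sp_le {A : Set (List X)} {S : Submodule (ZMod 2) (Ch X)} (h : ∀ l ∈ A, sg l ∈ S) :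
    sp A ≤ S := by
  apply Submodule.span_le.2
  rintro _ ⟨l, hl, rfl⟩
  exact h l hl

lemma sp_mono {A B : Set (List X)} (h : A ⊆ B) : sp A ≤ sp B :=
  sp_le fun _ hl => sg_mem (h hl)

lemma sp_map {V : Type} [AddCommGroup V] [Module (ZMod 2) V] {A : Set (List X)}
    {S : Submodule (ZMod 2) V}
    (T : Ch X →ₗ[ZMod 2] V) (h : ∀ l ∈ A, T (sg l) ∈ S) {c : Ch X} (hc : c ∈ sp A) : T c ∈ S :=
  (sp_le (S := S.comap T) h) hc

lemma sp_eq {V : Type} [AddCommGroup V] [Module (ZMod 2) V] {A : Set (List X)}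
    (T U : Ch X →ₗ[ZMod 2] V) (h : ∀ l ∈ A, T (sg l) = U (sg l)) {c : Ch X} (hc : c ∈ sp A) :
    T c = U c :=
  (sp_le (S := LinearMap.eqLocus T U) h) hc

lemma dbl {V : Type} [AddCommGroup V] [Module (ZMod 2) V] (c : V) : c + c = 0 := by
  have : (2 : ZMod 2) • c = 0 := by
    rw [show (2 : ZMod 2) = 0 from rfl, zero_smul]
  rwa [two_smul] at this

/-- Prepend a vertex. -/
def cns (v : X) : Ch X →ₗ[ZMod 2] Ch X := lin fun l => sg (v :: l)

@[simp] lemma cns_sg (v : X) (l : List X) : cns v (sg l) = sg (v :: l) := by simp [cns]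

/-- Boundary of a list. -/
def bdL : List X → Ch X
  | [] => 0
  | v :: l => sg l + cns v (bdL l)

/-- Boundary. -/
def bd : Ch X →ₗ[ZMod 2] Ch X := lin bdL

@[simp] lemma bd_nil : bd (sg ([] : List X)) = 0 := by simp [bd, bdL]
@[simp] lemma bd_cons (v : X) (l : List X) : bd (sg (v :: l)) = sg l + cns v (bd (sg l)) := by
  simp [bd, bdL]

lemma bd_cns (v : X) (c : Ch X) : bd (cns v c) = c + cns v (bd c) := by
  have : bd ∘ₗ cns v = LinearMap.id + cns v ∘ₗ bd := lin_ext fun l => by simp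
  exact LinearMap.congr_fun this c

/-- Pushforward. -/
def mp (φ : X → Y) : Ch X →ₗ[ZMod 2] Ch Y := lin fun l => sg (l.map φ)

@[simp] lemma mp_sg (φ : X → Y) (l : List X) : mp φ (sg l) = sg (l.map φ) := by simp [mp]

lemma mp_cns (φ : X → Y) (v : X) (c : Ch X) : mp φ (cns v c) = cns (φ v) (mp φ c) := by
  have : mp φ ∘ₗ cns v = cns (φ v) ∘ₗ mp φ := lin_ext fun l => by simp
  exact LinearMap.congr_fun this c

lemma bd_mp (φ : X → Y) (c : Ch X) : bd (mp φ c) = mp φ (bd c) := by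
  have : bd ∘ₗ mp φ = mp φ ∘ₗ bd := lin_ext fun l => by
    induction l with
    | nil => simp
    | cons v l ih =>
      simp only [LinearMap.comp_apply, mp_sg] at ih ⊢
      simp [mp_cns, ih]
  exact LinearMap.congr_fun this c

lemma mp_mp {Z : Type} (φ : X → Y) (ψ : Y → Z) (c : Ch X) : mp ψ (mp φ c) = mp (ψ ∘ φ) c := by
  have : mp ψ ∘ₗ mp φ = mp (ψ ∘ φ) := lin_ext fun l => by simp
  exact LinearMap.congr_fun this c

lemma mp_id (c : Ch X) : mp id c = c := by
  have : mp (id : X → X) = LinearMap.id := lin_ext fun l => by simp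
  exact LinearMap.congr_fun this c

/-- Prism of a list. -/
def prL (φ ψ : X → Y) : List X → Ch Y
  | [] => 0
  | v :: l => sg (φ v :: ψ v :: l.map ψ) + cns (φ v) (prL φ ψ l)

/-- Prism operator. -/
def pr (φ ψ : X → Y) : Ch X →ₗ[ZMod 2] Ch Y := lin (prL φ ψ)

@[simp] lemma pr_nil (φ ψ : X → Y) : pr φ ψ (sg []) = 0 := by simp [pr, prL]
@[simp] lemma pr_cons (φ ψ : X → Y) (v : X) (l : List X) : pr φ ψ (sg (v :: l)) =
    sg (φ v :: ψ v :: l.map ψ) + cns (φ v) (pr φ ψ (sg l)) := by simp [pr, prL]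

lemma pr_cns (φ ψ : X → Y) (v : X) (c : Ch X) :
    pr φ ψ (cns v c) = cns (φ v) (cns (ψ v) (mp ψ c)) + cns (φ v) (pr φ ψ c) := by
  have : pr φ ψ ∘ₗ cns v = cns (φ v) ∘ₗ cns (ψ v) ∘ₗ mp ψ + cns (φ v) ∘ₗ pr φ ψ :=
    lin_ext fun l => by simp
  exact LinearMap.congr_fun this c

lemma bd_pr (φ ψ : X → Y) (c : Ch X) :
    bd (pr φ ψ c) = pr φ ψ (bd c) + mp φ c + mp ψ c := by
  have : bd ∘ₗ pr φ ψ = pr φ ψ ∘ₗ bd + mp φ + mp ψ := lin_ext fun l => by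
    induction l with
    | nil => simpa using (dbl _).symm
    | cons v l ih =>
      simp only [LinearMap.comp_apply, LinearMap.add_apply, mp_sg] at ih ⊢
      simp only [pr_cons, map_add, bd_cons, bd_cns, ih, pr_cns, ← mp_sg, bd_mp, List.map_cons,
        ← cns_sg]
      have h := dbl (cns (φ v) (mp ψ (sg l)))
      linear_combination (norm := module) h
  exact LinearMap.congr_fun this c

lemma pr_mem (φ ψ : X → Y) (l : List X) : pr φ ψ (sg l) ∈
    sp {l' : List Y | l'.length = l.length + 1 ∧ ∀ x ∈ l', ∃ v ∈ l, x = φ v ∨ x = ψ v} := by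
  induction l with
  | nil => simp
  | cons v l ih =>
    rw [pr_cons]
    refine add_mem (sg_mem ?_) (sp_map _ ?_ ih)
    · simp
      intro a ha
      exact Or.inr ⟨a, ha, Or.inr rfl⟩
    · rintro l' ⟨h1, h2⟩
      rw [cns_sg]
      refine sg_mem ⟨by simp [h1], ?_⟩
      intro x hx
      rcases List.mem_cons.1 hx with rfl | hx
      · exact ⟨v, by simp, Or.inl rfl⟩
      · obtain ⟨w, hw, h⟩ := h2 x hx
        exact ⟨w, by simp [hw], h⟩

lemma bd_mem (P : X → Prop) {c : Ch X} (hc : c ∈ sp {l : List X | ∀ x ∈ l, P x}) :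
    bd c ∈ sp {l : List X | ∀ x ∈ l, P x} := by
  refine sp_map bd ?_ hc
  intro l hl
  induction l with
  | nil => simp
  | cons v l ih =>
    simp only [Set.mem_ofPred_eq, List.mem_cons, forall_eq_or_imp] at hl
    rw [bd_cons]
    refine add_mem (sg_mem hl.2) (sp_map _ ?_ (ih hl.2))
    intro l' hl'
    rw [cns_sg]
    exact sg_mem (by simpa using ⟨hl.1, hl'⟩)

/-! ### Labels -/

section labels
variable {I : Type} [LinearOrder I]

/-- Insertion of a label into a sorted list (zero if its index is already there). -/
def insL (v : I × Bool) : List (I × Bool) → Ch (I × Bool)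
  | [] => sg [v]
  | w :: l => if v.1 < w.1 then sg (v :: w :: l) else if w.1 < v.1 then cns w (insL v l) else 0

/-- Linear extension of the insertion. -/
def ins (v : I × Bool) : Ch (I × Bool) →ₗ[ZMod 2] Ch (I × Bool) := lin (insL v)

lemma ins_nil (v : I × Bool) : ins v (sg []) = sg [v] := by simp [ins, insL]

lemma ins_cons (v w : I × Bool) (l : List (I × Bool)) : ins v (sg (w :: l)) =
    if v.1 < w.1 then sg (v :: w :: l) else if w.1 < v.1 then cns w (ins v (sg l)) else 0 := by
  simp [ins, insL]

lemma ins_cns_gt (v w : I × Bool) (h : w.1 < v.1) (c) : ins v (cns w c) = cns w (ins v c) := by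
  have : ins v ∘ₗ cns w = cns w ∘ₗ ins v := lin_ext fun l => by
    simp [ins_cons, h, h.not_gt]
  exact LinearMap.congr_fun this c

lemma ins_cns_eq (v : I × Bool) (c) : ins v (cns v c) = 0 := by
  have : ins v ∘ₗ cns v = 0 := lin_ext fun l => by
    simp [ins_cons]
  exact LinearMap.congr_fun this c

lemma ins_small (v : I × Bool) {c} (hc : c ∈ sp {l : List (I × Bool) | ∀ x ∈ l, v.1 < x.1}) :
    ins v c = cns v c := by
  refine sp_eq _ _ ?_ hc
  intro l hl
  cases l with
  | nil => simp [ins_nil]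
  | cons w l =>
    have : v.1 < w.1 := hl w (by simp)
    simp [ins_cons, this]

/-- Strictly sorted by index. -/
def Srt (l : List (I × Bool)) : Prop := l.Pairwise fun a b => a.1 < b.1

lemma bd_ins_sg (v : I × Bool) (l : List (I × Bool)) (hs : Srt l)
    (hn : ∀ w ∈ l, w.1 = v.1 → w = v) : bd (ins v (sg l)) = sg l + ins v (bd (sg l)) := by
  induction l with
  | nil => simp [ins_nil]
  | cons w l ih =>
    obtain ⟨h1, h2⟩ := List.pairwise_cons.1 hs
    have ih := ih h2 (fun w hw => hn w (by simp [hw]))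
    rcases lt_trichotomy v.1 w.1 with h | h | h
    · have hm : sg (w :: l) ∈ sp {l : List (I × Bool) | ∀ x ∈ l, v.1 < x.1} := by
        apply sg_mem
        intro x hx
        rcases List.mem_cons.1 hx with rfl | hx
        · exact h
        · exact h.trans (h1 x hx)
      rw [ins_small v hm, ins_small v (bd_mem _ hm), bd_cns]
    · have hw : w = v := hn w (by simp) h.symm
      subst hw
      have hm : sg l ∈ sp {l : List (I × Bool) | ∀ x ∈ l, w.1 < x.1} := sg_mem h1
      rw [bd_cons, map_add, ins_cns_eq, ins_small w hm, ← cns_sg, ins_cns_eq]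
      simp [dbl]
    · rw [← cns_sg, ins_cns_gt _ _ h, bd_cns, bd_cns, ih, map_add, map_add, ins_cns_gt _ _ h]
      abel

/-- Sorted form. -/
def nfL : List (I × Bool) → Ch (I × Bool)
  | [] => sg []
  | v :: l => ins v (nfL l)

/-- Sorted form of a chain. -/
def nf : Ch (I × Bool) →ₗ[ZMod 2] Ch (I × Bool) := lin nfL

lemma nf_nil : nf (sg ([] : List (I × Bool))) = sg [] := by simp [nf, nfL]
lemma nf_cons (v : I × Bool) (l) : nf (sg (v :: l)) = ins v (nf (sg l)) := by simp [nf, nfL]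
lemma nf_cns (v : I × Bool) (c) : nf (cns v c) = ins v (nf c) := by
  have : nf ∘ₗ cns v = ins v ∘ₗ nf := lin_ext fun l => by simp [nf_cons]
  exact LinearMap.congr_fun this c

lemma ins_mem (v : I × Bool) (l : List (I × Bool)) (hs : Srt l) : ins v (sg l) ∈
    sp {l' : List (I × Bool) | Srt l' ∧ l'.length = l.length + 1 ∧ ∀ x ∈ l', x = v ∨ x ∈ l} := by
  induction l with
  | nil => rw [ins_nil]; exact sg_mem (by simp [Srt])
  | cons w l ih =>
    obtain ⟨h1, h2⟩ := List.pairwise_cons.1 hs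
    rw [ins_cons]
    split_ifs with h h'
    · apply sg_mem
      refine ⟨List.pairwise_cons.2 ⟨?_, hs⟩, by simp, by simp⟩
      intro x hx
      rcases List.mem_cons.1 hx with rfl | hx
      · exact h
      · exact h.trans (h1 x hx)
    · refine sp_map _ ?_ (ih h2)
      rintro l' ⟨a1, a2, a3⟩
      rw [cns_sg]
      refine sg_mem ⟨List.pairwise_cons.2 ⟨?_, a1⟩, by simp [a2], ?_⟩
      · intro x hx
        rcases a3 x hx with rfl | hx
        · exact h'
        · exact h1 x hx
      · intro x hx
        rcases List.mem_cons.1 hx with rfl | hx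
        · simp
        · rcases a3 x hx with rfl | hx <;> simp [*]
    · exact zero_mem _

lemma nf_mem (l : List (I × Bool)) : nf (sg l) ∈
    sp {l' : List (I × Bool) | Srt l' ∧ l'.length = l.length ∧ ∀ x ∈ l', x ∈ l} := by
  induction l with
  | nil => rw [nf_nil]; exact sg_mem (by simp [Srt])
  | cons v l ih =>
    rw [nf_cons]
    refine sp_map _ ?_ ih
    rintro l' ⟨a1, a2, a3⟩
    refine sp_mono ?_ (ins_mem v l' a1)
    rintro l'' ⟨b1, b2, b3⟩
    refine ⟨b1, by simp [b2, a2], ?_⟩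
    intro x hx
    rcases b3 x hx with rfl | hx
    · simp
    · simp [a3 x hx]

lemma bd_nf (l : List (I × Bool)) (hn : ∀ v ∈ l, ∀ w ∈ l, w.1 = v.1 → w = v) :
    bd (nf (sg l)) = nf (bd (sg l)) := by
  induction l with
  | nil => simp [nf_nil]
  | cons v l ih =>
    have ih := ih fun a ha b hb => hn a (by simp [ha]) b (by simp [hb])
    rw [nf_cons, bd_cons, map_add, nf_cns, ← ih]
    refine sp_eq (bd ∘ₗ ins v) (LinearMap.id + ins v ∘ₗ bd) ?_ (nf_mem l)
    rintro l' ⟨a1, a2, a3⟩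
    exact bd_ins_sg v l' a1 fun w hw => hn v (by simp) w (by simp [a3 w hw])

/-- Alternating test. -/
def altL : Bool → List (I × Bool) → ZMod 2
  | _, [] => 1
  | b, c :: l => if c.2 = b then altL (!b) l else 0

/-- Linear extension of the alternating test. -/
def alt (b : Bool) : Ch (I × Bool) →ₗ[ZMod 2] ZMod 2 := lin (altL b)

lemma alt_nil (b : Bool) : alt b (sg ([] : List (I × Bool))) = 1 := by simp [alt, altL]
lemma alt_cons (b : Bool) (c : I × Bool) (l) :
    alt b (sg (c :: l)) = if c.2 = b then alt (!b) (sg l) else 0 := by simp [alt, altL]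
lemma alt_cns (b : Bool) (v : I × Bool) (c) :
    alt b (cns v c) = if v.2 = b then alt (!b) c else 0 := by
  have : alt b ∘ₗ cns v = if v.2 = b then alt (!b) else 0 := lin_ext fun l => by
    simp only [LinearMap.comp_apply, cns_sg, alt_cons]
    split_ifs <;> simp
  rw [← LinearMap.comp_apply, this]
  split_ifs <;> simp

lemma alt_bd (b : Bool) (c : Ch (I × Bool)) : alt b (bd c) = alt b c + alt (!b) c := by
  have : ∀ b : Bool, alt b ∘ₗ bd = (alt b + alt (!b) : Ch (I × Bool) →ₗ[ZMod 2] ZMod 2) := by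
    intro b
    refine lin_ext fun l => ?_
    induction l generalizing b with
    | nil => simp [alt_nil]; rfl
    | cons v l ih =>
      simp only [LinearMap.comp_apply, LinearMap.add_apply] at ih ⊢
      rw [bd_cons, map_add, alt_cns, alt_cons, alt_cons, ih]
      have := dbl (alt b (sg l))
      rcases v with ⟨i, v⟩
      cases v <;> cases b <;> simp_all <;> linear_combination this
  exact LinearMap.congr_fun (this b) c

/-- Flip of the sign. -/
def flp (v : I × Bool) : I × Bool := (v.1, !v.2)

lemma ins_flp (v : I × Bool) (c) : ins (flp v) (mp flp c) = mp flp (ins v c) := by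
  have : ins (flp v) ∘ₗ mp flp = mp flp ∘ₗ ins v := lin_ext fun l => by
    induction l with
    | nil => simp [ins_nil]
    | cons w l ih =>
      simp only [LinearMap.comp_apply, mp_sg, List.map_cons] at ih ⊢
      rw [ins_cons, ins_cons]
      have h1 : (flp v).1 = v.1 := rfl
      have h2 : (flp w).1 = w.1 := rfl
      rw [h1, h2]
      split_ifs
      · simp
      · rw [mp_cns, ih]
      · simp
  exact LinearMap.congr_fun this c

lemma nf_flp (c : Ch (I × Bool)) : nf (mp flp c) = mp flp (nf c) := by
  have : nf ∘ₗ mp flp = mp flp ∘ₗ (nf : Ch (I × Bool) →ₗ[ZMod 2] _) := lin_ext fun l => by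
    induction l with
    | nil => simp [nf_nil]
    | cons w l ih =>
      simp only [LinearMap.comp_apply, mp_sg, List.map_cons] at ih ⊢
      rw [nf_cons, nf_cons, ih, ins_flp]
  exact LinearMap.congr_fun this c

lemma alt_flp (b : Bool) (c : Ch (I × Bool)) : alt b (mp flp c) = alt (!b) c := by
  have : ∀ b : Bool, alt b ∘ₗ mp flp = (alt (!b) : Ch (I × Bool) →ₗ[ZMod 2] _) := by
    intro b
    refine lin_ext fun l => ?_
    induction l generalizing b with
    | nil => simp [alt_nil]
    | cons w l ih =>
      simp only [LinearMap.comp_apply, mp_sg, List.map_cons] at ih ⊢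
      rw [alt_cons, alt_cons, ih]
      rcases w with ⟨i, w⟩
      cases w <;> cases b <;> simp [flp]
  exact LinearMap.congr_fun (this b) c

lemma alt_ne (b : Bool) (l : List (I × Bool)) (h : alt b (sg l) ≠ 0) (j : ℕ) (hj : j < l.length) :
    l[j].2 = (b ^^ decide (j % 2 = 1)) := by
  induction l generalizing b j with
  | nil => simp at hj
  | cons v l ih =>
    rw [alt_cons] at h
    split_ifs at h with hv
    cases j with
    | zero => simpa using hv
    | succ j =>
      rw [List.getElem_cons_succ, ih _ h]
      rcases Nat.mod_two_eq_zero_or_one j with hp | hp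
      · have hq : (j + 1) % 2 = 1 := by omega
        cases b <;> simp [hp, hq]
      · have hq : (j + 1) % 2 = 0 := by omega
        cases b <;> simp [hp, hq]
    exact absurd rfl h

/-- The Fan functional of a labelling. -/
def fan (lam : X → I × Bool) (b : Bool) : Ch X →ₗ[ZMod 2] ZMod 2 := alt b ∘ₗ nf ∘ₗ mp lam

lemma fan_bd (lam : X → I × Bool) (b : Bool) {A : Set (List X)}
    (hA : ∀ l ∈ A, ∀ x ∈ l, ∀ y ∈ l, (lam y).1 = (lam x).1 → lam y = lam x)
    {c : Ch X} (hc : c ∈ sp A) : fan lam b (bd c) = fan lam b c + fan lam (!b) c := by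
  refine sp_eq (fan lam b ∘ₗ bd) (fan lam b + fan lam (!b)) ?_ hc
  intro l hl
  simp only [fan, LinearMap.comp_apply, LinearMap.add_apply]
  rw [← bd_mp, mp_sg, ← bd_nf, alt_bd]
  simp only [List.mem_map]
  rintro _ ⟨x, hx, rfl⟩ _ ⟨y, hy, rfl⟩
  exact hA l hl x hx y hy

lemma fan_neg (lam : X → I × Bool) (b : Bool) (τ : X → X) {A : Set (List X)}
    (hA : ∀ l ∈ A, ∀ x ∈ l, lam (τ x) = flp (lam x))
    {c : Ch X} (hc : c ∈ sp A) : fan lam b (mp τ c) = fan lam (!b) c := by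
  have : mp lam (mp τ c) = mp flp (mp lam c) := by
    rw [mp_mp, mp_mp]
    refine sp_eq _ _ ?_ hc
    intro l hl
    rw [mp_sg, mp_sg]
    congr 1
    exact List.map_congr_left (hA l hl)
  simp only [fan, LinearMap.comp_apply]
  rw [this, nf_flp, alt_flp]

lemma fan_ne (lam : X → I × Bool) (b : Bool) {A : Set (List X)} {c : Ch X} (hc : c ∈ sp A)
    (h : fan lam b c ≠ 0) : ∃ l ∈ A, ∃ L : List (I × Bool), Srt L ∧ L.length = l.length ∧
      (∀ v ∈ L, ∃ x ∈ l, lam x = v) ∧ ∀ (j : ℕ) (hj : j < L.length),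
        L[j].2 = (b ^^ decide (j % 2 = 1)) := by
  by_contra! hcon
  apply h
  refine sp_eq (fan lam b) 0 ?_ hc
  intro l hl
  simp only [fan, LinearMap.comp_apply, mp_sg, LinearMap.zero_apply]
  refine sp_eq (alt b) 0 ?_ (nf_mem (l.map lam))
  rintro L ⟨a1, a2, a3⟩
  by_contra hne
  obtain ⟨j, hj, hj'⟩ := hcon l hl L a1 (by simpa using a2) (fun v hv => by
    simpa using a3 v hv)
  exact hj' (alt_ne b L hne j hj)

end labels

/-! ### Small chains on spheres -/

/-- Small lists on the `k`-dimensional coordinate subsphere. -/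
def Bs (d k n : ℕ) (η : ℝ) : Set (List (EuclideanSpace ℝ (Fin (d + 1)))) :=
  {l | l.length = n ∧ (∀ x ∈ l, ‖x‖ = 1 ∧ ∀ i : Fin (d + 1), k < i.1 → x i = 0) ∧
    ∀ x ∈ l, ∀ y ∈ l, dist x y ≤ η}

/-- Rotation towards `p`. -/
def rot {d : ℕ} (p : EuclideanSpace ℝ (Fin (d + 1))) (t : ℝ)
    (x : EuclideanSpace ℝ (Fin (d + 1))) : EuclideanSpace ℝ (Fin (d + 1)) :=
  Real.cos t • x + Real.sin t • p

lemma rot_norm {d : ℕ} {p x : EuclideanSpace ℝ (Fin (d + 1))} (hp : ‖p‖ = 1) (hx : ‖x‖ = 1)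
    (h : inner ℝ x p = 0) (t : ℝ) : ‖rot p t x‖ = 1 := by
  have h1 := norm_add_sq_eq_norm_sq_add_norm_sq_real (x := Real.cos t • x) (y := Real.sin t • p)
    (by rw [inner_smul_left, inner_smul_right, h]; simp)
  rw [norm_smul, norm_smul, hp, hx] at h1
  have h2 : ‖rot p t x‖ * ‖rot p t x‖ = 1 := by
    rw [rot, h1]
    simp only [mul_one, Real.norm_eq_abs, abs_mul_abs_self]
    nlinarith [Real.sin_sq_add_cos_sq t]
  nlinarith [norm_nonneg (rot p t x)]

lemma rot_dist {d : ℕ} {p x y : EuclideanSpace ℝ (Fin (d + 1))} (hp : ‖p‖ = 1) (hx : ‖x‖ = 1)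
    (s t : ℝ) : dist (rot p s x) (rot p t y) ≤ 2 * |s - t| + dist x y := by
  have e : rot p s x - rot p t y =
      (Real.cos s - Real.cos t) • x + (Real.sin s - Real.sin t) • p + Real.cos t • (x - y) := by
    simp only [rot]; module
  rw [dist_eq_norm, e, dist_eq_norm]
  refine (norm_add_le _ _).trans (add_le_add ((norm_add_le _ _).trans ?_) ?_)
  · rw [norm_smul, norm_smul, hp, hx, Real.norm_eq_abs, Real.norm_eq_abs]
    have h1 : |Real.cos s - Real.cos t| ≤ |s - t| := by
      simpa [Real.dist_eq] using Real.lipschitzWith_cos.dist_le_mul s t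
    have h2 : |Real.sin s - Real.sin t| ≤ |s - t| := by
      simpa [Real.dist_eq] using Real.lipschitzWith_sin.dist_le_mul s t
    linarith
  · rw [norm_smul, Real.norm_eq_abs]
    exact mul_le_of_le_one_left (norm_nonneg _) (Real.abs_cos_le_one t)

lemma fill {d k n : ℕ} (hk : k + 1 ≤ d) {η : ℝ} (hη : 0 < η)
    {s : Ch (EuclideanSpace ℝ (Fin (d + 1)))} (hs : s ∈ sp (Bs d k n (η / 2))) (hb : bd s = 0) :
    ∃ h ∈ sp (Bs d (k + 1) (n + 1) η), bd h = s := by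
  obtain ⟨N, hN⟩ := exists_nat_gt (Real.pi / (η / 2))
  have hN0 : (0 : ℝ) < N := lt_trans (by positivity) hN
  have hN1 : Real.pi / N ≤ η / 2 := by
    rw [div_lt_iff₀ (by positivity)] at hN
    rw [div_le_iff₀ hN0]; linarith
  let i₀ : Fin (d + 1) := ⟨k + 1, by omega⟩
  let p : EuclideanSpace ℝ (Fin (d + 1)) := EuclideanSpace.single i₀ 1
  have hp : ‖p‖ = 1 := by simp [p]
  have hp0 : ∀ i : Fin (d + 1), k + 1 < i.1 → p i = 0 := by
    intro i hi
    have : i ≠ i₀ := by rintro rfl; simp [i₀] at hi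
    simp [p, this]
  have hin : ∀ x : EuclideanSpace ℝ (Fin (d + 1)), (∀ i : Fin (d + 1), k < i.1 → x i = 0) →
      inner ℝ x p = 0 := by
    intro x hx
    have := hx i₀ (by simp [i₀])
    simp [p, EuclideanSpace.inner_single_right, this]
  let t : ℕ → ℝ := fun j => Real.pi / 2 * (j / N)
  have hrot : ∀ (j : ℝ) (x : EuclideanSpace ℝ (Fin (d + 1))),
      (‖x‖ = 1 ∧ ∀ i : Fin (d + 1), k < i.1 → x i = 0) →
      (‖rot p j x‖ = 1 ∧ ∀ i : Fin (d + 1), k + 1 < i.1 → rot p j x i = 0) := by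
    rintro j x ⟨h1, h2⟩
    refine ⟨rot_norm hp h1 (hin x h2) _, ?_⟩
    intro i hi
    simp [rot, hp0 i hi, h2 i (by omega)]
  have key : ∀ j : ℕ, ∃ g ∈ sp (Bs d (k + 1) (n + 1) η), bd g = s + mp (rot p (t j)) s := by
    intro j
    induction j with
    | zero =>
      refine ⟨0, zero_mem _, ?_⟩
      have : rot p (t 0) = id := by ext x; simp [rot, t]
      rw [this, mp_id, dbl, map_zero]
    | succ j ih =>
      obtain ⟨g, hg, hg'⟩ := ih
      refine ⟨g + pr (rot p (t j)) (rot p (t (j + 1))) s, add_mem hg ?_, ?_⟩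
      · refine sp_map _ ?_ hs
        rintro l ⟨a1, a2, a3⟩
        refine sp_mono ?_ (pr_mem _ _ l)
        rintro l' ⟨b1, b2⟩
        have hstep : |t j - t (j + 1)| ≤ η / 4 := by
          have : t j - t (j + 1) = - (Real.pi / N / 2) := by
            simp only [t]; push_cast; field_simp; ring
          rw [this, abs_neg, abs_of_nonneg (by positivity)]
          linarith
        have hstep' : |t (j + 1) - t j| ≤ η / 4 := by rwa [abs_sub_comm]
        refine ⟨by omega, ?_, ?_⟩
        · intro x hx
          obtain ⟨v, hv, rfl | rfl⟩ := b2 x hx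
          · exact hrot _ _ (a2 v hv)
          · exact hrot _ _ (a2 v hv)
        · intro x hx y hy
          obtain ⟨v, hv, hxv⟩ := b2 x hx
          obtain ⟨w, hw, hyw⟩ := b2 y hy
          have h1 := a3 v hv w hw
          have h2 := fun s t => rot_dist (y := w) hp (a2 v hv).1 s t
          have h3 := h2 (t j) (t j)
          have h4 := h2 (t j) (t (j + 1))
          have h5 := h2 (t (j + 1)) (t j)
          have h6 := h2 (t (j + 1)) (t (j + 1))
          simp only [sub_self, abs_zero] at h3 h6
          rcases hxv with rfl | rfl <;> rcases hyw with rfl | rfl <;> linarith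
      · rw [map_add, hg', bd_pr, hb, map_zero]
        have := dbl (mp (rot p (t j)) s)
        linear_combination (norm := module) this
  obtain ⟨g, hg, hg'⟩ := key N
  have hcon : rot p (t N) = fun _ => p := by
    ext x
    have : t N = Real.pi / 2 := by simp [t, hN0.ne']
    simp [rot, this]
  refine ⟨g + cns p (mp (rot p (t N)) s), add_mem hg ?_, ?_⟩
  · refine sp_map (cns p ∘ₗ mp (rot p (t N))) ?_ hs
    rintro l ⟨a1, a2, a3⟩
    rw [LinearMap.comp_apply, mp_sg, cns_sg, hcon]
    have hall : ∀ x ∈ p :: l.map (fun _ => p), x = p := by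
      intro x hx
      rcases List.mem_cons.1 hx with h | h
      · exact h
      · obtain ⟨_, _, rfl⟩ := List.mem_map.1 h; rfl
    refine sg_mem ⟨by simp [a1], ?_, ?_⟩
    · intro x hx
      rw [hall x hx]
      exact ⟨hp, hp0⟩
    · intro x hx y hy
      rw [hall x hx, hall y hy, dist_self]
      exact hη.le
  · rw [map_add, hg', bd_cns, bd_mp, hb, map_zero, map_zero]
    have := dbl (mp (rot p (t N)) s)
    linear_combination (norm := module) this

lemma neg_mem {d k n : ℕ} {η : ℝ} {s : Ch (EuclideanSpace ℝ (Fin (d + 1)))}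
    (hs : s ∈ sp (Bs d k n η)) : mp Neg.neg s ∈ sp (Bs d k n η) := by
  refine sp_map _ ?_ hs
  rintro l ⟨a1, a2, a3⟩
  rw [mp_sg]
  refine sg_mem ⟨by simp [a1], ?_, ?_⟩
  · simp only [List.mem_map]
    rintro _ ⟨x, hx, rfl⟩
    refine ⟨by rw [norm_neg]; exact (a2 x hx).1, fun i hi => ?_⟩
    simp [(a2 x hx).2 i hi]
  · simp only [List.mem_map]
    rintro _ ⟨x, hx, rfl⟩ _ ⟨y, hy, rfl⟩
    rw [dist_neg_neg]
    exact a3 x hx y hy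

lemma main_chain {d : ℕ} {I : Type} [LinearOrder I]
    (lam : EuclideanSpace ℝ (Fin (d + 1)) → I × Bool)
    (hneg : ∀ x, ‖x‖ = 1 → lam (-x) = flp (lam x)) {η₀ : ℝ}
    (hnc : ∀ x y, ‖x‖ = 1 → ‖y‖ = 1 → dist x y ≤ η₀ → (lam y).1 = (lam x).1 → lam y = lam x)
    (k : ℕ) (hk : k ≤ d) : ∀ η : ℝ, 0 < η → η ≤ η₀ → ∃ h ∈ sp (Bs d k (k + 1) η),
      bd h + mp Neg.neg (bd h) = 0 ∧ fan lam true h + fan lam false h = 1 := by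
  induction k with
  | zero =>
    intro η hη hη0
    let p : EuclideanSpace ℝ (Fin (d + 1)) := EuclideanSpace.single 0 1
    refine ⟨sg [p], sg_mem ⟨rfl, ?_, ?_⟩, ?_, ?_⟩
    · simp only [List.mem_singleton]
      rintro x rfl
      refine ⟨by simp [p], fun i hi => ?_⟩
      have : i ≠ 0 := by rintro rfl; simp at hi
      simp [p, this]
    · simp [hη.le]
    · simp [dbl]
    · simp only [fan, LinearMap.comp_apply, mp_sg, List.map_cons, List.map_nil, nf_cons, nf_nil,
        ins_nil, alt_cons, alt_nil]
      cases (lam p).2 <;> simp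
  | succ k ih =>
    intro η hη hη0
    obtain ⟨h, hm, hb, hf⟩ := ih (by omega) (η / 2) (by linarith) (by linarith)
    obtain ⟨h', hm', hb'⟩ := fill (by omega) hη (s := h + mp Neg.neg h)
      (add_mem hm (neg_mem hm)) (by rw [map_add, bd_mp, hb])
    refine ⟨h', hm', ?_, ?_⟩
    · rw [hb', map_add, mp_mp]
      have : (Neg.neg ∘ Neg.neg : EuclideanSpace ℝ (Fin (d + 1)) → _) = id := by
        ext x; simp
      rw [this, mp_id, add_comm (mp Neg.neg h) h, dbl]
    · have e := fan_bd lam true (A := Bs d (k + 1) (k + 1 + 1) η) (c := h') (by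
        rintro l ⟨a1, a2, a3⟩ x hx y hy
        exact hnc x y (a2 x hx).1 (a2 y hy).1 ((a3 x hx y hy).trans hη0)) hm'
      have e2 := fan_neg lam true Neg.neg (A := Bs d k (k + 1) (η / 2)) (c := h) (by
        rintro l ⟨a1, a2, a3⟩ x hx
        exact hneg x (a2 x hx).1) hm
      simp only [Bool.not_true] at e e2
      rw [← e, hb', map_add, e2, hf]

/-- Compactness: small tuples in a closed set accumulate at a constant tuple. -/
lemma const_of_small {E : Type} [MetricSpace E] {K : Set E} (hK : IsCompact K) {n : ℕ}
    {C : Set (Fin n → E)} (hC : IsClosed C)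
    (h : ∀ η : ℝ, 0 < η → ∃ x ∈ C, (∀ i, x i ∈ K) ∧ ∀ i j, dist (x i) (x j) ≤ η) :
    ∃ x ∈ C, (∀ i, x i ∈ K) ∧ ∀ i j, x i = x j := by
  haveI : Nonempty (Fin n → E) := ⟨(h 1 one_pos).choose⟩
  choose! u hu using h
  let v : ℕ → (Fin n → E) := fun N => u (1 / ((N : ℝ) + 1))
  have hv : ∀ N, v N ∈ C ∧ (∀ i, v N i ∈ K) ∧ ∀ i j, dist (v N i) (v N j) ≤ 1 / ((N : ℝ) + 1) :=
    fun N => hu _ (by positivity)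
  have hKn : IsCompact (Set.univ.pi fun _ : Fin n => K) := isCompact_univ_pi fun _ => hK
  obtain ⟨x, hx, φ, hφ, hlim⟩ := hKn.tendsto_subseq (x := v) fun N i _ => (hv N).2.1 i
  refine ⟨x, hC.mem_of_tendsto hlim (Filter.Eventually.of_forall fun N => (hv _).1),
    fun i => hx i trivial, ?_⟩
  intro i j
  have h1 := (tendsto_pi_nhds.1 hlim i).dist (tendsto_pi_nhds.1 hlim j)
  have h2 := (tendsto_one_div_add_atTop_nhds_zero_nat (𝕜 := ℝ)).comp hφ.tendsto_atTop
  have h3 := le_of_tendsto_of_tendsto h1 h2 (Filter.Eventually.of_forall fun N => (hv (φ N)).2.2 i j)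
  exact dist_le_zero.1 h3

/-- Real sign of a boolean. -/
def sgn (b : Bool) : ℝ := if b then 1 else -1

end

end FanProof

open FanProof in
/-- Fan's corollary on odd maps: if continuous odd maps `f₁,…,f_m : S^d → ℝ` have no common
zero, then there are `x₀ ∈ S^d` and indices `i₁ < ⋯ < i_{d+1}` such that each `f_{i_j}(x₀)`
has maximal absolute value among the `|f_k(x₀)|` and the signs alternate, i.e.
`f_{i_j}(x₀) = ε · (-1)^j · max_k |f_k(x₀)|` for some fixed `ε ∈ {±1}`. -/
theorem stmt8 (d m : ℕ)
    (f : Fin m → EuclideanSpace ℝ (Fin (d + 1)) → ℝ)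
    (hcont : ∀ i, Continuous (f i))
    (hodd : ∀ i y, f i (-y) = - f i y)
    (hnz : ∀ y ∈ Metric.sphere (0 : EuclideanSpace ℝ (Fin (d + 1))) 1, ∃ i, f i y ≠ 0) :
    ∃ x₀ ∈ Metric.sphere (0 : EuclideanSpace ℝ (Fin (d + 1))) 1,
      ∃ ι : Fin (d + 1) → Fin m, StrictMono ι ∧
      ∃ ε M : ℝ, (ε = 1 ∨ ε = -1) ∧ (∀ k, |f k x₀| ≤ M) ∧
        ∀ j : Fin (d + 1), f (ι j) x₀ = ε * (-1) ^ ((j : ℕ) + 1) * M := by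
  obtain ⟨i₀, -⟩ := hnz (EuclideanSpace.single 0 1) (by simp)
  haveI : Nonempty (Fin m) := ⟨i₀⟩
  have hK : IsCompact (Metric.sphere (0 : EuclideanSpace ℝ (Fin (d + 1))) 1) := isCompact_sphere _ _
  have hmax : ∀ a : Fin m → ℝ, ∃ i, ∀ k, a k ≤ a i := fun a => Finite.exists_max a
  choose F hF using hmax
  let lam : EuclideanSpace ℝ (Fin (d + 1)) → Fin m × Bool := fun x =>
    (F fun k => |f k x|, decide (0 < f (F fun k => |f k x|) x))
  have hlam : ∀ x i b, lam x = (i, b) → ∀ k, |f k x| ≤ sgn b * f i x := by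
    intro x i b h k
    have h1 : (F fun k => |f k x|) = i := congrArg Prod.fst h
    have h2 : decide (0 < f (F fun k => |f k x|) x) = b := congrArg Prod.snd h
    have h3 := hF (fun k => |f k x|) k
    rw [h1] at h2 h3
    refine h3.trans (le_of_eq ?_)
    subst h2
    by_cases hpos : 0 < f i x
    · simp [sgn, hpos, abs_of_pos hpos]
    · simp [sgn, hpos, abs_of_nonpos (not_lt.1 hpos)]
  have hneg : ∀ x, ‖x‖ = 1 → lam (-x) = flp (lam x) := by
    intro x hx
    have e : (fun k => |f k (-x)|) = fun k => |f k x| := by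
      funext k; rw [hodd, abs_neg]
    have hne : f (F fun k => |f k x|) x ≠ 0 := by
      intro h0
      obtain ⟨i, hi⟩ := hnz x (by simpa using hx)
      have := hF (fun k => |f k x|) i
      simp only [h0, abs_zero] at this
      exact hi (abs_nonpos_iff.1 this)
    simp only [lam, flp, e, hodd, Prod.mk.injEq, true_and]
    rcases lt_or_gt_of_ne hne with h | h
    · simp [h, h.le]
    · simp [h, h.le]
  have hcabs : ∀ k, Continuous fun x => |f k x| := fun k => (hcont k).abs
  -- no complementary pairs at small distance
  have hnc : ∃ η₀ : ℝ, 0 < η₀ ∧ ∀ x y, ‖x‖ = 1 → ‖y‖ = 1 → dist x y ≤ η₀ →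
      (lam y).1 = (lam x).1 → lam y = lam x := by
    by_contra! hcon
    let C : Set (Fin 2 → EuclideanSpace ℝ (Fin (d + 1))) :=
      ⋃ q : Fin m × Bool, {x | ∀ k, |f k (x 0)| ≤ sgn q.2 * f q.1 (x 0) ∧
        |f k (x 1)| ≤ sgn (!q.2) * f q.1 (x 1)}
    have hC : IsClosed C := by
      refine isClosed_iUnion_of_finite fun q => ?_
      simp only [Set.setOf_forall]
      refine isClosed_iInter fun k => ?_
      refine IsClosed.inter ?_ ?_
      · exact isClosed_le ((hcabs k).comp (continuous_apply 0))
          (continuous_const.mul ((hcont q.1).comp (continuous_apply 0)))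
      · exact isClosed_le ((hcabs k).comp (continuous_apply 1))
          (continuous_const.mul ((hcont q.1).comp (continuous_apply 1)))
    obtain ⟨x, hxC, hxK, hxe⟩ := const_of_small hK hC (by
      intro η hη
      obtain ⟨x, y, hx, hy, hxy, h1, h2⟩ := hcon η hη
      refine ⟨![x, y], ?_, ?_, ?_⟩
      · refine Set.mem_iUnion.2 ⟨lam x, fun k => ⟨hlam x _ _ rfl k, hlam y _ _ ?_ k⟩⟩
        refine Prod.ext h1 ?_
        have : (lam y).2 ≠ (lam x).2 := fun h => h2 (Prod.ext h1 h)
        exact Bool.eq_not.2 this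
      · intro i; fin_cases i <;> simp [hx, hy]
      · intro i j
        have := hxy
        rw [dist_comm] at this
        fin_cases i <;> fin_cases j <;> simp [hxy, this, hη.le])
    obtain ⟨q, hq⟩ := Set.mem_iUnion.1 hxC
    obtain ⟨i, hi⟩ := hnz (x 0) (hxK 0)
    have h1 := hq i
    rw [← hxe 0 1] at h1
    apply hi
    rw [← abs_nonpos_iff]
    rcases q with ⟨q, b⟩
    cases b <;> simp [sgn] at h1 <;> linarith [h1.1, h1.2]
  obtain ⟨η₀, hη₀, hnc⟩ := hnc
  let s : Bool → Fin (d + 1) → ℝ := fun b j => sgn (b ^^ decide (j.1 % 2 = 1))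
  let C : Set (Fin (d + 1) → EuclideanSpace ℝ (Fin (d + 1))) :=
    ⋃ q : {ι : Fin (d + 1) → Fin m // StrictMono ι} × Bool,
      {x | ∀ j k, |f k (x j)| ≤ s q.2 j * f (q.1.1 j) (x j)}
  have hC : IsClosed C := by
    refine isClosed_iUnion_of_finite fun q => ?_
    simp only [Set.setOf_forall]
    refine isClosed_iInter fun j => isClosed_iInter fun k => ?_
    exact isClosed_le ((hcabs k).comp (continuous_apply j))
      (continuous_const.mul ((hcont _).comp (continuous_apply j)))
  obtain ⟨x, hxC, hxK, hxe⟩ := const_of_small hK hC (by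
    intro η hη
    obtain ⟨h, hm, -, hf⟩ := main_chain lam hneg hnc d le_rfl (min η η₀) (lt_min hη hη₀)
      (min_le_right _ _)
    have : ∃ b, fan lam b h ≠ 0 := by
      by_contra! hall
      rw [hall, hall] at hf
      simp at hf
    obtain ⟨b, hb⟩ := this
    obtain ⟨l, ⟨a1, a2, a3⟩, L, hs, hl, hL, hbL⟩ := fan_ne lam b hm hb
    have hlen : L.length = d + 1 := by omega
    have hj : ∀ j : Fin (d + 1), j.1 < L.length := fun j => by omega
    have hx : ∀ j : Fin (d + 1), ∃ x ∈ l, lam x = L[j.1]'(hj j) :=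
      fun j => hL _ (List.getElem_mem _)
    choose x hxl hxL using hx
    refine ⟨x, Set.mem_iUnion.2 ⟨(⟨fun j => (L[j.1]'(hj j)).1, ?_⟩, b), ?_⟩, ?_, ?_⟩
    · intro i j hij
      exact List.pairwise_iff_getElem.1 hs i.1 j.1 (hj i) (hj j) hij
    · intro j k
      refine hlam (x j) _ _ ?_ k
      rw [hxL]
      exact Prod.ext rfl (hbL j.1 (hj j))
    · intro j
      simpa using (a2 _ (hxl j)).1
    · intro i j
      exact (a3 _ (hxl i) _ (hxl j)).trans (min_le_left _ _))
  obtain ⟨⟨⟨ι, hι⟩, b⟩, hq⟩ := Set.mem_iUnion.1 hxC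
  have hq' : ∀ j k, |f k (x 0)| ≤ s b j * f (ι j) (x 0) := by
    intro j k
    have := hq j k
    rwa [hxe j 0] at this
  have hs1 : ∀ j, s b j * s b j = 1 := by
    intro j; simp only [s, sgn]; split_ifs <;> norm_num
  have hsle : ∀ j y, s b j * y ≤ |y| := by
    intro j y; simp only [s, sgn]; split_ifs
    · simpa using le_abs_self y
    · simpa using neg_le_abs y
  refine ⟨x 0, hxK 0, ι, hι, - sgn b, s b 0 * f (ι 0) (x 0), ?_, hq' 0, ?_⟩
  · cases b <;> simp [sgn]
  · intro j
    have e : s b j * f (ι j) (x 0) = s b 0 * f (ι 0) (x 0) :=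
      le_antisymm ((hsle _ _).trans (hq' 0 _)) ((hsle _ _).trans (hq' j _))
    have e2 : - sgn b * (-1) ^ (j.1 + 1) = s b j := by
      rcases Nat.even_or_odd j.1 with hp | hp
      · have : j.1 % 2 = 0 := Nat.even_iff.1 hp
        simp [pow_succ, hp.neg_one_pow, s, this]
      · have : j.1 % 2 = 1 := Nat.odd_iff.1 hp
        cases b <;> simp [pow_succ, hp.neg_one_pow, s, this, sgn]
    rw [e2, ← e, ← mul_assoc, hs1, one_mul]
end
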